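/- arXiv:1504.07506 — 2 statements merged into one kernel-verified Lean document; each statement's English description precedes it below -/
import Mathlib

section
/- Let G be a finite group, H a subgroup of G of index n ≥ 2, F a field of characteristic p > 0, V an H-module of finite dimension a over F, and S a submodule of the induced module V↑G = F[G] ⊗_{F[H]} V. If G contains a soluble subgroup N acting transitively on the set of right cosets of H in G, then d_G(S) ≤ a·E_sol(n,p) = a·min{w*(n), n_p}. -/
/-- `dMod G S` is `d_G(S)`: the minimal number of elements required to generate the
(`G`-stable) submodule `S` as a `G`-module. -/
noncomputable def dMod (G : Type*) [Group G] {F W : Type*} [Field F] [AddCommGroup W]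
    [Module F W] [DistribMulAction G W] (S : Submodule F W) : ℕ :=
  sInf {m : ℕ | ∃ T : Finset W, T.card = m ∧ (T : Set W) ⊆ (S : Set W) ∧
    Submodule.span F {w : W | ∃ g : G, ∃ t ∈ T, w = g • t} = S}

/-- `K(n) = ω₁(n) − ω(n)`, where for `n = p₁^{r₁}⋯p_t^{r_t}`, `ω(n) = ∑ rᵢ` and
`ω₁(n) = ∑ rᵢ·pᵢ`. -/
def Kfun (n : ℕ) : ℕ :=
  (n.factorization.sum fun p r => r * p) - (n.factorization.sum fun _ r => r)

/-- `w*(n) = (n / 2^{K(n)}) · binom(K(n), ⌊K(n)/2⌋)`. -/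
noncomputable def wstar (n : ℕ) : ℝ :=
  (n : ℝ) / 2 ^ Kfun n * (Kfun n).choose (Kfun n / 2)

/-- `walkSum k c` is the value at `c` of the `k`-th iterate of `f ↦ (c ↦ f (c + 1) + f (c - 1))`
applied to the sign function. -/
def walkSum : ℕ → ℤ → ℤ
  | 0, c => c.sign
  | k + 1, c => walkSum k (c + 1) + walkSum k (c - 1)

/-- The sum of `f` over the `q` integers of the form `c + q - 1 - 2 * i` around `c`. -/
def windowSum (q : ℕ) (f : ℤ → ℤ) (c : ℤ) : ℤ :=
  ∑ i ∈ Finset.range q, f (c + q - 1 - 2 * i)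

lemma walkSum_neg (k : ℕ) (c : ℤ) : walkSum k (-c) = -walkSum k c := by
  induction k generalizing c with
  | zero => simp [walkSum]
  | succ k ih =>
    simp only [walkSum]
    rw [show -c + 1 = -(c - 1) by ring, show -c - 1 = -(c + 1) by ring, ih, ih]
    ring

lemma walkSum_spread (k : ℕ) (c s : ℤ) (hc : 0 ≤ c) (hs : 0 ≤ s) :
    walkSum k (c + s + 1) + walkSum k (c - s - 1) ≤
      walkSum k (c + s - 1) + walkSum k (c - s + 1) := by
  induction k generalizing c with
  | zero =>
    simp only [walkSum]
    rcases lt_trichotomy (c - s - 1) 0 with h | h | h <;>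
    rcases lt_trichotomy (c - s + 1) 0 with h' | h' | h' <;>
    rcases lt_trichotomy (c + s - 1) 0 with h'' | h'' | h'' <;>
    simp only [Int.sign_eq_one_of_pos (show 0 < c + s + 1 by omega), Int.sign_eq_one_of_pos,
      Int.sign_eq_neg_one_of_neg, h, h', h'', Int.sign_zero] <;> omega
  | succ k ih =>
    simp only [walkSum]
    have h1 := ih (c + 1) (by omega)
    rcases hc.eq_or_lt with rfl | hc
    · have e1 := walkSum_neg k (s + 1 + 1)
      have e2 := walkSum_neg k (s + 1 - 1)
      have e3 := walkSum_neg k (s - 1 + 1)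
      have e4 := walkSum_neg k (s - 1 - 1)
      ring_nf at e1 e2 e3 e4 ⊢
      linarith
    · have h2 := ih (c - 1) (by omega)
      ring_nf at h1 h2 ⊢
      linarith

lemma walkSum_pair_le (k : ℕ) (c : ℤ) (hc : 0 ≤ c) (j d : ℕ) :
    walkSum k (c + (j + 2 * d : ℕ)) + walkSum k (c - (j + 2 * d : ℕ)) ≤
      walkSum k (c + j) + walkSum k (c - j) := by
  induction d with
  | zero => simp
  | succ d ih =>
    refine le_trans ?_ ih
    have h := walkSum_spread k c (j + 2 * d + 1) hc (by omega)
    push_cast at h ⊢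
    ring_nf at h ⊢
    linarith

lemma windowSum_add_two (r : ℕ) (f : ℤ → ℤ) (c : ℤ) :
    windowSum (r + 2) f c = windowSum r f c + f (c + (r + 1)) + f (c - (r + 1)) := by
  unfold windowSum
  rw [Finset.sum_range_succ, Finset.sum_range_succ']
  have : ∀ i : ℕ, c + ((r + 2 : ℕ) : ℤ) - 1 - 2 * ((i + 1 : ℕ) : ℤ) = c + r - 1 - 2 * i := by
    intro i; push_cast; ring
  simp only [this]
  have h1 : c + ((r + 2 : ℕ) : ℤ) - 1 - 2 * ((0 : ℕ) : ℤ) = c + (r + 1) := by push_cast; ring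
  have h2 : c + (r : ℤ) - 1 - 2 * r = c - (r + 1) := by ring
  rw [h1, h2]

lemma windowSum_succ (q : ℕ) (f : ℤ → ℤ) (c : ℤ) :
    windowSum (q + 1) f (c + 1) = f (c + q + 1) + windowSum q f c := by
  unfold windowSum
  rw [Finset.sum_range_succ', add_comm]
  congr 1
  · congr 1; push_cast; ring
  · refine Finset.sum_congr rfl fun i _ => ?_
    congr 1; push_cast; ring

lemma two_mul_windowSum (r : ℕ) (f : ℤ → ℤ) (c : ℤ) :
    2 * windowSum r f c =
      ∑ i ∈ Finset.range r, (f (c + (r - 1 - 2 * i)) + f (c - (r - 1 - 2 * i))) := by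
  rw [Finset.sum_add_distrib, two_mul]
  unfold windowSum
  congr 1
  · refine Finset.sum_congr rfl fun i _ => ?_
    congr 1; ring
  · rw [← Finset.sum_range_reflect]
    refine Finset.sum_congr rfl fun i hi => ?_
    have hi := Finset.mem_range.1 hi
    congr 1
    have : ((r - 1 - i : ℕ) : ℤ) = r - 1 - i := by omega
    rw [this]; ring

lemma windowSum_walkSum_zero (q k : ℕ) : windowSum q (walkSum k) 0 = 0 := by
  have h := two_mul_windowSum q (walkSum k) 0
  simp only [zero_add, zero_sub, walkSum_neg, add_neg_cancel, Finset.sum_const_zero] at h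
  omega

lemma windowSum_spread (k r : ℕ) (c : ℤ) (hc : 0 ≤ c) :
    r * windowSum (r + 2) (walkSum k) c ≤ (r + 2) * windowSum r (walkSum k) c := by
  have h : (r : ℤ) * (walkSum k (c + (r + 1)) + walkSum k (c - (r + 1))) ≤
      2 * windowSum r (walkSum k) c := by
    rw [two_mul_windowSum]
    have := Finset.card_nsmul_le_sum (Finset.range r)
      (fun i : ℕ => walkSum k (c + (r - 1 - 2 * i)) + walkSum k (c - (r - 1 - 2 * i)))
      (walkSum k (c + (r + 1)) + walkSum k (c - (r + 1))) ?_
    · simpa using this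
    · intro i hi
      have hi := Finset.mem_range.1 hi
      rcases le_total (2 * i + 1) r with h | h
      · have := walkSum_pair_le k c hc (r - 1 - 2 * i) (i + 1)
        have e1 : ((r - 1 - 2 * i + 2 * (i + 1) : ℕ) : ℤ) = r + 1 := by omega
        have e2 : ((r - 1 - 2 * i : ℕ) : ℤ) = r - 1 - 2 * i := by omega
        rwa [e1, e2] at this
      · have := walkSum_pair_le k c hc (2 * i + 1 - r) (r - i)
        have e1 : ((2 * i + 1 - r + 2 * (r - i) : ℕ) : ℤ) = r + 1 := by omega
        have e2 : ((2 * i + 1 - r : ℕ) : ℤ) = -(r - 1 - 2 * i) := by omega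
        rw [e1, e2] at this
        simp only [sub_neg_eq_add] at this
        rw [← sub_eq_add_neg] at this
        linarith
  rw [windowSum_add_two]
  nlinarith

lemma windowSum_walkSum_succ (q k : ℕ) (c : ℤ) :
    windowSum (q + 1) (walkSum (k + 1)) c =
      windowSum (q + 2) (walkSum k) c + windowSum q (walkSum k) c := by
  have h1 : windowSum (q + 1) (walkSum (k + 1)) c =
      windowSum (q + 1) (walkSum k) (c + 1) + windowSum (q + 1) (walkSum k) (c - 1) := by
    unfold windowSum
    rw [← Finset.sum_add_distrib]
    refine Finset.sum_congr rfl fun i _ => ?_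
    simp only [walkSum]
    congr 2 <;> ring
  have h2 : windowSum (q + 1) (walkSum k) (c - 1) =
      windowSum q (walkSum k) c + walkSum k (c - (q + 1)) := by
    unfold windowSum
    rw [Finset.sum_range_succ]
    congr 1
    · refine Finset.sum_congr rfl fun i _ => ?_
      congr 1; push_cast; ring
    · congr 1; push_cast; ring
  rw [h1, h2, windowSum_succ, windowSum_add_two]
  ring_nf

lemma two_pow_mul_windowSum_le (q k : ℕ) (c : ℤ) (hc : 0 ≤ c) :
    2 ^ q * windowSum (q + 1) (walkSum k) c ≤ (q + 1) * walkSum (k + q) c := by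
  induction q generalizing k with
  | zero => simp [windowSum]
  | succ q ih =>
    have h1 := ih (k + 1)
    have h2 := windowSum_spread k q c hc
    rw [windowSum_walkSum_succ] at h1
    rw [show k + 1 + q = k + (q + 1) by ring] at h1
    have h3 : ((q : ℤ) + 1) * (2 ^ (q + 1) * windowSum (q + 2) (walkSum k) c) ≤
        (q + 1) * ((q + 2) * walkSum (k + (q + 1)) c) := by
      calc ((q : ℤ) + 1) * (2 ^ (q + 1) * windowSum (q + 2) (walkSum k) c)
          = 2 ^ q * ((2 * q + 2) * windowSum (q + 2) (walkSum k) c) := by ring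
        _ ≤ 2 ^ q * ((q + 2) * (windowSum (q + 2) (walkSum k) c + windowSum q (walkSum k) c)) :=
            mul_le_mul_of_nonneg_left (by nlinarith) (by positivity)
        _ = (q + 2) *
            (2 ^ q * (windowSum (q + 2) (walkSum k) c + windowSum q (walkSum k) c)) := by ring
        _ ≤ (q + 2) * ((q + 1) * walkSum (k + (q + 1)) c) :=
            mul_le_mul_of_nonneg_left h1 (by positivity)
        _ = _ := by ring
    have := le_of_mul_le_mul_left h3 (by positivity)
    push_cast
    linarith

/-- The number of `±1` walks of length `k` from `0` to `c`. -/
def walkCount : ℕ → ℤ → ℤ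
  | 0, c => if c = 0 then 1 else 0
  | k + 1, c => walkCount k (c + 1) + walkCount k (c - 1)

lemma walkCount_of_lt (k : ℕ) (c : ℤ) (h : c < -k) : walkCount k c = 0 := by
  induction k generalizing c with
  | zero => simp only [walkCount]; rw [if_neg]; simp at h; omega
  | succ k ih => simp only [walkCount]; rw [ih _ (by push_cast at h; omega),
      ih _ (by push_cast at h; omega)]; rfl

lemma walkCount_odd (k : ℕ) (m : ℤ) : walkCount k (2 * m + 1 - k) = 0 := by
  induction k generalizing m with
  | zero => simp only [walkCount]; rw [if_neg]; push_cast; omega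
  | succ k ih =>
    simp only [walkCount]
    have h1 := ih m
    have h2 := ih (m - 1)
    push_cast
    ring_nf at h1 h2 ⊢
    rw [h1, h2]; rfl

lemma walkCount_eq_choose (k m : ℕ) : walkCount k (2 * m - k) = k.choose m := by
  induction k generalizing m with
  | zero =>
    rcases m with _ | m
    · simp [walkCount]
    · simp only [walkCount, Nat.choose_zero_succ]; rw [if_neg]; simp; push_cast; omega
  | succ k ih =>
    simp only [walkCount]
    rcases m with _ | m
    · have h1 := ih 0
      have h2 := walkCount_of_lt k (-k - 2) (by omega)
      push_cast at h1 ⊢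
      ring_nf at h1 h2 ⊢
      rw [h1, h2]; simp
    · have h1 := ih m
      have h2 := ih (m + 1)
      rw [Nat.choose_succ_succ']
      push_cast at h1 h2 ⊢
      rw [← h1, ← h2]
      ring_nf

lemma walkSum_sub_walkSum (k : ℕ) (c : ℤ) :
    walkSum k (c + 1) - walkSum k (c - 1) = 2 * walkCount k c + walkCount (k + 1) c := by
  induction k generalizing c with
  | zero =>
    simp only [walkSum, walkCount]
    rcases lt_trichotomy (c + 1) 0 with h | h | h <;>
    rcases lt_trichotomy (c - 1) 0 with h' | h' | h' <;>
    simp only [Int.sign_eq_one_of_pos, Int.sign_eq_neg_one_of_neg, h, h', Int.sign_zero] <;>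
    split_ifs <;> omega
  | succ k ih =>
    have h1 := ih (c + 1)
    have h2 := ih (c - 1)
    simp only [walkSum, walkCount] at h1 h2 ⊢
    ring_nf at h1 h2 ⊢
    linarith

lemma walkSum_one (k : ℕ) : walkSum k 1 = k.choose (k / 2) := by
  have h := walkSum_sub_walkSum k 0
  have hneg := walkSum_neg k 1
  rw [zero_add, zero_sub, hneg] at h
  rcases Nat.even_or_odd' k with ⟨m, rfl | rfl⟩
  · have h1 := walkCount_eq_choose (2 * m) m
    have h2 := walkCount_odd (2 * m + 1) m
    push_cast at h1 h2
    rw [sub_self] at h1 h2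
    rw [h1, h2] at h
    rw [Nat.mul_div_cancel_left _ two_pos]
    omega
  · have h1 := walkCount_eq_choose (2 * m + 1 + 1) (m + 1)
    have h2 := walkCount_odd (2 * m + 1) m
    push_cast at h1 h2
    rw [show (2 * ((m : ℤ) + 1) - (2 * m + 1 + 1)) = 0 by ring] at h1
    rw [sub_self] at h2
    rw [h1, h2, Nat.choose_succ_succ] at h
    have h3 : (2 * m + 1).choose (m + 1) = (2 * m + 1).choose m := by
      rw [← Nat.choose_symm_of_eq_add]; omega
    rw [show (2 * m + 1) / 2 = m by omega]
    rw [h3] at h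
    push_cast at h
    omega

/-- A finite type `X` with a relation `R` splits into `R`-chains whose lengths `c i` satisfy
`∑ i, walkSum k (c i) ≤ b k` for every `k`. -/
def ChainBound {X : Type*} (R : X → X → Prop) (b : ℕ → ℝ) : Prop :=
  ∃ (I : Type) (_ : Fintype I) (c : I → ℕ) (e : (Σ i, Fin (c i)) ≃ X),
    (∀ i (j j' : Fin (c i)), j ≤ j' → R (e ⟨i, j⟩) (e ⟨i, j'⟩)) ∧
      ∀ k, ∑ i, (walkSum k (c i) : ℝ) ≤ b k

lemma ChainBound.sigma {I : Type} [Fintype I] {X : I → Type*} {Y : Type*}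
    {R : ∀ i, X i → X i → Prop} {b : I → ℕ → ℝ} {R' : Y → Y → Prop} {b' : ℕ → ℝ}
    (h : ∀ i, ChainBound (R i) (b i)) (φ : (Σ i, X i) ≃ Y)
    (hφ : ∀ i x x', R i x x' → R' (φ ⟨i, x⟩) (φ ⟨i, x'⟩)) (hb : ∀ k, ∑ i, b i k ≤ b' k) :
    ChainBound R' b' := by
  choose J hJ c e he hs using h
  refine ⟨Σ i, J i, inferInstance, fun x => c x.1 x.2,
    ((Equiv.sigmaAssoc fun i j => Fin (c i j)).trans (Equiv.sigmaCongrRight e)).trans φ, ?_, ?_⟩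
  · rintro ⟨i, j⟩ k k' hk
    exact hφ _ _ _ (he i j k k' hk)
  · intro k
    rw [Fintype.sum_sigma]
    exact (Finset.sum_le_sum fun i _ => hs i k).trans (hb k)

lemma ChainBound.map {X Y : Type*} {R : X → X → Prop} {b : ℕ → ℝ} {R' : Y → Y → Prop}
    {b' : ℕ → ℝ} (h : ChainBound R b) (φ : X ≃ Y) (hφ : ∀ x x', R x x' → R' (φ x) (φ x'))
    (hb : ∀ k, b k ≤ b' k) : ChainBound R' b' := by
  obtain ⟨J, hJ, c, e, he, hs⟩ := h
  exact ⟨J, hJ, c, e.trans φ, fun i j j' hj => hφ _ _ (he i j j' hj),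
    fun k => (hs k).trans (hb k)⟩

lemma ChainBound.sum {X Y Z : Type*} {R : X → X → Prop} {b : ℕ → ℝ} {R' : Y → Y → Prop}
    {b' : ℕ → ℝ} {R'' : Z → Z → Prop} {b'' : ℕ → ℝ} (h : ChainBound R b)
    (h' : ChainBound R' b') (φ : X ⊕ Y ≃ Z)
    (hl : ∀ x x', R x x' → R'' (φ (.inl x)) (φ (.inl x')))
    (hr : ∀ x x', R' x x' → R'' (φ (.inr x)) (φ (.inr x')))
    (hb : ∀ k, b k + b' k ≤ b'' k) : ChainBound R'' b'' := by
  obtain ⟨I, hI, c, e, he, hs⟩ := h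
  obtain ⟨J, hJ, d, e', he', hs'⟩ := h'
  refine ⟨I ⊕ J, inferInstance, Sum.elim c d,
    ((Equiv.sumSigmaDistrib _).trans (Equiv.sumCongr e e')).trans φ, ?_, fun k => ?_⟩
  · rintro (i | i) j j' hj
    · exact hl _ _ (he i j j' hj)
    · exact hr _ _ (he' i j j' hj)
  · rw [Fintype.sum_sum_type]
    exact (add_le_add (hs k) (hs' k)).trans (hb k)

lemma chainBound_fin (c : ℕ) :
    ChainBound (fun i j : Fin c => i ≤ j) fun k => walkSum k c :=
  ⟨Unit, inferInstance, fun _ => c, Equiv.uniqueSigma _, fun _ _ _ h => h, fun k => by simp⟩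

lemma chainBound_of_isEmpty {X : Type*} [IsEmpty X] (R : X → X → Prop) :
    ChainBound R fun _ => 0 :=
  ⟨Empty, inferInstance, fun _ => 0, Equiv.equivOfIsEmpty _ _, fun i => i.elim, fun k => by simp⟩

/-- The grid `Fin (c + 1) × Fin (q + 1)` is the union of the hook made of its first column and
last row and of a copy of `Fin c × Fin q`. -/
def hookEquiv (c q : ℕ) :
    (Fin (c + q + 1) ⊕ Fin c × Fin q) ≃ Fin (c + 1) × Fin (q + 1) where
  toFun
    | .inl i => if h : (i : ℕ) ≤ q then (0, ⟨i, by omega⟩) else (⟨i - q, by omega⟩, Fin.last q)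
    | .inr (i, j) => (i.succ, j.castSucc)
  invFun x := if h : (x.2 : ℕ) = q ∨ (x.1 : ℕ) = 0 then .inl ⟨x.1 + x.2, by omega⟩
    else .inr (⟨x.1 - 1, by omega⟩, ⟨x.2, by omega⟩)
  left_inv := by
    rintro (i | ⟨i, j⟩)
    · by_cases h : (i : ℕ) ≤ q
      · simp [h]
      · simp [h]; ext; simp; omega
    · have := j.2
      simp; omega
  right_inv := by
    rintro ⟨i, j⟩
    by_cases h : (j : ℕ) = q ∨ (i : ℕ) = 0
    · simp only [h, dite_true]
      rcases h with h | h
      · split_ifs with h'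
        · refine Prod.ext (Fin.ext ?_) (Fin.ext ?_) <;> simp only [Fin.val_zero] <;> omega
        · refine Prod.ext (Fin.ext ?_) (Fin.ext ?_) <;> simp only [Fin.val_last] <;> omega
      · have := j.2
        rw [dif_pos (by omega)]
        refine Prod.ext (Fin.ext ?_) (Fin.ext ?_) <;> simp only [Fin.val_zero] <;> omega
    · simp only [h, dite_false]
      ext <;> simp
      omega

lemma chainBound_grid (c q : ℕ) :
    ChainBound (fun x y : Fin c × Fin q => x.1 ≤ y.1 ∧ x.2 ≤ y.2)
      fun k => windowSum q (walkSum k) c := by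
  induction q generalizing c with
  | zero =>
    refine (chainBound_of_isEmpty _).map (Equiv.refl (Fin c × Fin 0)) (fun _ _ h => h) fun k => ?_
    simp [windowSum]
  | succ q ih =>
    rcases c with _ | c
    · refine (chainBound_of_isEmpty _).map (Equiv.refl (Fin 0 × Fin (q + 1)))
        (fun _ _ h => h) fun k => ?_
      simp [windowSum_walkSum_zero]
    refine ChainBound.sum (chainBound_fin (c + q + 1)) (ih c) (hookEquiv c q) ?_ ?_ ?_
    · intro i j h
      have h : (i : ℕ) ≤ j := h
      simp only [hookEquiv, Equiv.coe_fn_mk]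
      split_ifs <;> refine ⟨Fin.le_def.2 ?_, Fin.le_def.2 ?_⟩ <;>
        simp only [Fin.val_zero, Fin.val_last] <;> omega
    · rintro ⟨i, j⟩ ⟨i', j'⟩ ⟨h, h'⟩
      exact ⟨Fin.succ_le_succ_iff.2 h, Fin.castSucc_le_castSucc_iff.2 h'⟩
    · intro k
      have := windowSum_succ q (walkSum k) c
      push_cast
      rw [this]
      push_cast
      exact le_rfl

lemma ChainBound.prod_fin {X : Type*} {R : X → X → Prop} {b : ℕ → ℝ} (h : ChainBound R b)
    (q : ℕ) :
    ChainBound (fun x y : X × Fin (q + 1) => R x.1 y.1 ∧ x.2 ≤ y.2)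
      fun k => ((q + 1 : ℕ) : ℝ) / 2 ^ q * b (k + q) := by
  obtain ⟨J, hJ, c, e, he, hs⟩ := h
  refine ChainBound.sigma (fun i => chainBound_grid (c i) (q + 1))
    ((Equiv.sigmaProdDistrib _ _).symm.trans (Equiv.prodCongr e (Equiv.refl _)))
    (fun i x x' hx => ⟨he _ _ _ hx.1, hx.2⟩) fun k => ?_
  refine le_trans ?_ (mul_le_mul_of_nonneg_left (hs (k + q)) (by positivity))
  rw [Finset.mul_sum]
  refine Finset.sum_le_sum fun i _ => ?_
  have := two_pow_mul_windowSum_le q k (c i) (by positivity)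
  have h2 : ((2 ^ q * windowSum (q + 1) (walkSum k) (c i) : ℤ) : ℝ) ≤
      (((q + 1) * walkSum (k + q) (c i) : ℤ) : ℝ) := by exact_mod_cast this
  push_cast at h2 ⊢
  rw [div_mul_eq_mul_div, le_div_iff₀ (by positivity)]
  linarith

lemma Kfun_eq_sum (n : ℕ) : Kfun n = n.factorization.sum fun p r => r * (p - 1) := by
  unfold Kfun Finsupp.sum
  rw [← Finset.sum_tsub_distrib]
  · simp [Nat.mul_sub]
  · intro p hp
    exact Nat.le_mul_of_pos_right _ (Nat.prime_of_mem_primeFactors hp).pos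

lemma Kfun_one : Kfun 1 = 0 := by simp [Kfun]

lemma Kfun_mul {m n : ℕ} (hm : m ≠ 0) (hn : n ≠ 0) : Kfun (m * n) = Kfun m + Kfun n := by
  simp only [Kfun_eq_sum]
  rw [Nat.factorization_mul hm hn, Finsupp.sum_add_index']
  · simp
  · intros; ring

lemma Kfun_prime {q : ℕ} (hq : q.Prime) : Kfun q = q - 1 := by
  rw [Kfun_eq_sum, hq.factorization]
  simp

/-- `g` moves `α` to `β` and everything below `α` to something below `β`, where `Ω` is ordered
by `ord`. -/
def IsMover {G Ω : Type*} [SMul G Ω] (ord : Ω → ℕ) (g : G) (α β : Ω) : Prop :=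
  g • α = β ∧ ∀ γ, ord γ < ord α → ord (g • γ) < ord β

lemma IsMover.one {G Ω : Type*} [Group G] [MulAction G Ω] (ord : Ω → ℕ) (α : Ω) :
    IsMover ord (1 : G) α α :=
  ⟨one_smul _ _, fun γ h => by rwa [one_smul]⟩

lemma IsMover.mul {G Ω : Type*} [Group G] [MulAction G Ω] {ord : Ω → ℕ} {g h : G} {α β γ : Ω}
    (hh : IsMover ord h β γ) (hg : IsMover ord g α β) : IsMover ord (h * g) α γ :=
  ⟨by rw [mul_smul, hg.1, hh.1], fun δ hδ => by rw [mul_smul]; exact hh.2 _ (hg.2 _ hδ)⟩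

/-- Along a chain of movable points the moving elements can be chosen coherently, starting from
any given element. -/
lemma exists_coherent_movers {G Ω : Type*} [Group G] [MulAction G Ω] (ord : Ω → ℕ) {c : ℕ}
    (y : Fin c → Ω) (hy : ∀ j j', j ≤ j' → ∃ g : G, IsMover ord g (y j) (y j'))
    (ω : Ω) (hω : ∀ j, ∃ g : G, g • ω = y j) :
    ∃ t : Fin c → G, (∀ j, t j • ω = y j) ∧
      ∀ j j', j ≤ j' → IsMover ord (t j' * (t j)⁻¹) (y j) (y j') := by
  induction c with
  | zero => exact ⟨fun _ => 1, fun j => j.elim0, fun j => j.elim0⟩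
  | succ c ih =>
    obtain ⟨t, ht, ht'⟩ := ih (fun j => y j.castSucc) (fun j j' h => hy _ _ (by simpa using h))
      (fun j => hω _)
    rcases c with _ | c
    · have : Subsingleton (Fin (0 + 1)) := inferInstanceAs (Subsingleton (Fin 1))
      obtain ⟨g, hg⟩ := hω 0
      refine ⟨fun _ => g, fun j => by rw [Subsingleton.elim j 0]; exact hg, fun j j' _ => ?_⟩
      rw [Subsingleton.elim j' j, mul_inv_cancel]
      exact IsMover.one _ _
    · obtain ⟨g, hg⟩ := hy (Fin.last c).castSucc (Fin.last (c + 1)) (Fin.le_last _)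
      obtain ⟨t', ht_last, ht_cast⟩ : ∃ t' : Fin (c + 1 + 1) → G,
          t' (Fin.last (c + 1)) = g * t (Fin.last c) ∧ ∀ j, t' (Fin.castSucc j) = t j :=
        ⟨Fin.snoc t (g * t (Fin.last c)), by simp, by simp⟩
      refine ⟨t', fun j => ?_, fun j j' h => ?_⟩
      · induction j using Fin.lastCases with
        | last => rw [ht_last, mul_smul, ht, hg.1]
        | cast j => rw [ht_cast, ht]
      · induction j' using Fin.lastCases with
        | last =>
          induction j using Fin.lastCases with
          | last => rw [mul_inv_cancel]; exact IsMover.one _ _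
          | cast j =>
            rw [ht_last, ht_cast, mul_assoc]
            exact hg.mul (ht' _ _ (Fin.le_last _))
        | cast j' =>
          induction j using Fin.lastCases with
          | last => exact absurd h (not_le.2 (Fin.castSucc_lt_last _))
          | cast j =>
            rw [ht_cast, ht_cast]
            exact ht' _ _ (by simpa using h)

/-- Lexicographic comparison in base `B`. -/
lemma lex_lt_iff {a b i j B : ℕ} (hi : i < B) (hj : j < B) :
    a * B + i < b * B + j ↔ a < b ∨ a = b ∧ i < j := by
  constructor
  · intro h
    rcases lt_trichotomy a b with h' | h' | h'
    · exact .inl h'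
    · subst h'; exact .inr ⟨rfl, by omega⟩
    · have : (b + 1) * B ≤ a * B := Nat.mul_le_mul_right _ h'
      rw [add_mul] at this
      omega
  · rintro (h | ⟨rfl, h⟩)
    · have : (a + 1) * B ≤ b * B := Nat.mul_le_mul_right _ h
      rw [add_mul] at this
      omega
    · omega

lemma exists_order_of_comm (n : ℕ) (Q : Type*) [Group Q] [Finite Q]
    (hcomm : ∀ a b : Q, a * b = b * a) (hn : Nat.card Q = n) :
    ∃ ord : Q → ℕ, Function.Injective ord ∧ ∀ c : ℕ,
      ChainBound (fun x y : Fin c × Q => x.1 ≤ y.1 ∧ ∃ g : Q, IsMover ord g x.2 y.2)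
        fun k => (n : ℝ) / 2 ^ Kfun n * walkSum (k + Kfun n) c := by
  induction n using Nat.strong_induction_on generalizing Q with
  | h n ih =>
  rcases subsingleton_or_nontrivial Q with hQ | hQ
  · have h1 : n = 1 := by rw [← hn]; exact Nat.card_of_subsingleton (1 : Q)
    subst h1
    refine ⟨fun _ => 0, fun a b _ => Subsingleton.elim a b, fun c => ?_⟩
    have : Unique Q := ⟨⟨1⟩, fun a => Subsingleton.elim a 1⟩
    refine (chainBound_fin c).map (Equiv.prodUnique (Fin c) Q).symm ?_ ?_
    · intro x x' h
      exact ⟨h, 1, IsMover.one _ _⟩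
    · intro k
      simp [Kfun_one]
  · have hcard : Nat.card Q ≠ 1 := by
      intro h
      exact not_subsingleton Q (Nat.card_eq_one_iff_unique.1 h).1
    set q := (Nat.card Q).minFac with hq
    have hqp : q.Prime := Nat.minFac_prime hcard
    have : Fact q.Prime := ⟨hqp⟩
    obtain ⟨x, hx⟩ := exists_prime_orderOf_dvd_card' q (Nat.minFac_dvd (Nat.card Q))
    set Z := Subgroup.zpowers x with hZ
    have : Z.Normal := ⟨fun a ha g => by rwa [hcomm g a, mul_inv_cancel_right]⟩
    have hZc : Nat.card Z = q := by rw [hZ, Nat.card_zpowers, hx]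
    set m := Nat.card (Q ⧸ Z) with hm
    have hmn : n = m * q := by
      rw [← hn, hm, ← hZc]; exact Subgroup.card_eq_card_quotient_mul_card_subgroup Z
    have hmpos : 0 < m := Nat.card_pos
    obtain ⟨ord, hinj, hord⟩ := ih m (by rw [hmn]; exact lt_mul_of_one_lt_right hmpos hqp.one_lt)
      (Q ⧸ Z) (fun a b => by
        induction a using QuotientGroup.induction_on
        induction b using QuotientGroup.induction_on
        rw [← QuotientGroup.mk_mul, hcomm, QuotientGroup.mk_mul]) rfl
    let s : Q ⧸ Z → Q := Quotient.out
    have hs : ∀ y, (s y : Q ⧸ Z) = y := fun y => Quotient.out_eq y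
    have hxZ : ∀ i : ℕ, ((x ^ i : Q) : Q ⧸ Z) = 1 := fun i =>
      (QuotientGroup.eq_one_iff _).2 (pow_mem (Subgroup.mem_zpowers x) i)
    let f : (Q ⧸ Z) × Fin q → Q := fun u => x ^ (u.2 : ℕ) * s u.1
    have hfmk : ∀ u, (f u : Q ⧸ Z) = u.1 := fun u => by
      simp only [f, QuotientGroup.mk_mul, hxZ, hs, one_mul]
    have hfinj : Function.Injective f := by
      rintro ⟨y, i⟩ ⟨y', i'⟩ h
      have h1 := congrArg (fun z : Q => (z : Q ⧸ Z)) h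
      simp only [hfmk] at h1
      subst h1
      have h2 : x ^ (i : ℕ) = x ^ (i' : ℕ) := mul_right_cancel h
      have := pow_injOn_Iio_orderOf (by simp [hx]) (by simp [hx]) h2
      exact Prod.ext rfl (Fin.ext this)
    have hfbij : Function.Bijective f := by
      refine (Nat.bijective_iff_injective_and_card f).2 ⟨hfinj, ?_⟩
      rw [Nat.card_prod, Nat.card_fin, hn, ← hmn]
    let ψ := Equiv.ofBijective f hfbij
    have hψ : ∀ u, ψ u = f u := fun u => rfl
    let ord' : Q → ℕ := fun z => ord (z : Q ⧸ Z) * q + (ψ.symm z).2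
    have hord' : ∀ y i, ord' (f (y, i)) = ord y * q + i := fun y i => by
      simp only [ord', hfmk]
      rw [← hψ, Equiv.symm_apply_apply]
    have hlt : ∀ y i y' i', ord' (f (y, i)) < ord' (f (y', i')) ↔
        ord y < ord y' ∨ y = y' ∧ i < i' := fun y i y' i' => by
      rw [hord', hord', lex_lt_iff i.2 i'.2, hinj.eq_iff, Fin.lt_def]
    refine ⟨ord', ?_, fun c => ?_⟩
    · intro z z' h
      obtain ⟨⟨y, i⟩, rfl⟩ := hfbij.2 z
      obtain ⟨⟨y', i'⟩, rfl⟩ := hfbij.2 z'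
      have h1 := (hlt y i y' i').not.1 h.not_lt
      have h2 := (hlt y' i' y i).not.1 h.not_gt
      push Not at h1 h2
      have h3 : y = y' := hinj (le_antisymm h2.1 h1.1)
      rw [h3, le_antisymm (h2.2 h3.symm) (h1.2 h3)]
    · have key := (hord c).prod_fin (q - 1)
      have hq1 : q - 1 + 1 = q := Nat.sub_add_cancel hqp.one_le
      rw [hq1] at key
      refine key.map ((Equiv.prodAssoc _ _ _).trans (Equiv.prodCongr (Equiv.refl _) ψ)) ?_ ?_
      · rintro ⟨⟨j, y⟩, i⟩ ⟨⟨j', y'⟩, i'⟩ ⟨⟨hj, g, hg, hg'⟩, hi⟩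
        refine ⟨hj, x ^ ((i' : ℕ) - i) * (s y' * (s y)⁻¹), ?_⟩
        have hi : (i : ℕ) ≤ i' := hi
        change IsMover ord' _ (f (y, i)) (f (y', i'))
        have hmk : ((s y' * (s y)⁻¹ : Q) : Q ⧸ Z) = g := by
          rw [QuotientGroup.mk_mul, QuotientGroup.mk_inv, hs, hs]
          exact mul_inv_eq_of_eq_mul hg.symm
        have hmove : ∀ k : Fin q, (hk : (k : ℕ) ≤ i) →
            (x ^ ((i' : ℕ) - i) * (s y' * (s y)⁻¹)) • f (y, k) =
              f (y', ⟨(i' : ℕ) - i + k, by omega⟩) := by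
          intro k hk
          simp only [f, smul_eq_mul, pow_add]
          rw [hcomm (x ^ (k : ℕ)) (s y), mul_assoc, mul_assoc, inv_mul_cancel_left,
            hcomm (s y'), mul_assoc]
        constructor
        · rw [hmove i le_rfl]
          congr 2
          exact Fin.ext (by simp; omega)
        · intro γ hγ
          obtain ⟨⟨z, k⟩, rfl⟩ := hfbij.2 γ
          rcases (hlt _ _ _ _).1 hγ with h | ⟨rfl, h⟩
          · obtain ⟨⟨z', k'⟩, h'⟩ := hfbij.2 ((x ^ ((i' : ℕ) - i) * (s y' * (s y)⁻¹)) • f (z, k))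
            have hz' : z' = g • z := by
              have := congrArg (fun z : Q => (z : Q ⧸ Z)) h'
              simp only [hfmk, smul_eq_mul, QuotientGroup.mk_mul _ (x ^ _ * _),
                QuotientGroup.mk_mul _ (x ^ _), hxZ, one_mul] at this
              rw [this, hmk, smul_eq_mul]
            rw [← h']
            exact (hlt _ _ _ _).2 (.inl (by rw [hz']; exact hg' _ h))
          · rw [hmove k (le_of_lt h)]
            have : (k : ℕ) < i := h
            exact (hlt _ _ _ _).2 (.inr ⟨rfl, Fin.lt_def.2 (by simp; omega)⟩)
      · intro k
        have hK : Kfun n = Kfun m + (q - 1) := by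
          rw [hmn, Kfun_mul hmpos.ne' hqp.ne_zero, Kfun_prime hqp]
        refine le_of_eq ?_
        rw [hK, show k + (q - 1) + Kfun m = k + (Kfun m + (q - 1)) by ring, hmn, pow_add]
        push_cast
        field_simp

lemma exists_normal_not_le_commutator_le {G : Type*} [Group G] [Group.IsSolvable G] {H : Subgroup G}
    (hH : H ≠ ⊤) : ∃ M : Subgroup G, M.Normal ∧ ¬ M ≤ H ∧ ⁅M, M⁆ ≤ H := by
  classical
  have hex : ∃ i, derivedSeries G i ≤ H := by
    obtain ⟨n, hn⟩ := (Group.isSolvable_def G).1 ‹_›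
    exact ⟨n, hn ▸ bot_le⟩
  rcases hi : Nat.find hex with _ | i
  · have h0 := Nat.find_spec hex
    rw [hi, derivedSeries_zero] at h0
    exact absurd (top_le_iff.1 h0) hH
  · refine ⟨derivedSeries G i, inferInstance, Nat.find_min hex (by omega), ?_⟩
    have h0 := Nat.find_spec hex
    rwa [hi, derivedSeries_succ] at h0

lemma exists_order_cosets {G : Type*} [Group G] [Finite G] [Group.IsSolvable G] (n : ℕ)
    (H : Subgroup G) (hn : H.index = n) :
    ∃ ord : G ⧸ H → ℕ, Function.Injective ord ∧
      ChainBound (fun α β => ∃ g : G, IsMover ord g α β)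
        fun k => (n : ℝ) / 2 ^ Kfun n * walkSum (k + Kfun n) 1 := by
  induction n using Nat.strong_induction_on generalizing H with
  | h n ih =>
  rcases eq_or_ne H ⊤ with rfl | hH
  · rw [Subgroup.index_top] at hn
    subst hn
    have : Subsingleton (G ⧸ (⊤ : Subgroup G)) := QuotientGroup.subsingleton_quotient_top
    have : Unique (G ⧸ (⊤ : Subgroup G)) := ⟨⟨1⟩, fun a => Subsingleton.elim a _⟩
    refine ⟨fun _ => 0, fun a b _ => Subsingleton.elim a b, ?_⟩
    refine (chainBound_fin 1).map (Equiv.ofUnique _ _) (fun x x' h => ⟨1, ?_⟩) ?_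
    · rw [Subsingleton.elim x x']
      exact IsMover.one _ _
    · intro k
      simp [Kfun_one]
  obtain ⟨M, hMn, hMH, hMc⟩ := exists_normal_not_le_commutator_le hH
  let H₀ := H.subgroupOf M
  have hH₀ : ∀ a b : M, (a * b)⁻¹ * (b * a) ∈ H₀ := fun a b => by
    rw [Subgroup.mem_subgroupOf]
    have := hMc (Subgroup.commutator_mem_commutator (inv_mem b.2) (inv_mem a.2))
    rw [commutatorElement_def] at this
    simpa [mul_assoc] using this
  have hH₀n : H₀.Normal := ⟨fun a ha g => by
    have h3 : g * a * g⁻¹ = a * ((g⁻¹ * a)⁻¹ * (a * g⁻¹)) := by group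
    rw [h3]
    exact mul_mem ha (hH₀ g⁻¹ a)⟩
  set Q := M ⧸ H₀ with hQ
  have hQc : ∀ a b : Q, a * b = b * a := fun a b => by
    induction a using QuotientGroup.induction_on
    induction b using QuotientGroup.induction_on
    rw [← QuotientGroup.mk_mul, ← QuotientGroup.mk_mul]
    exact QuotientGroup.eq.2 (hH₀ _ _)
  set K := M ⊔ H with hK
  have hHK : H ≤ K := le_sup_right
  have hMK : M ≤ K := le_sup_left
  have hmemK : ∀ g ∈ K, ∃ m : M, (m : G)⁻¹ * g ∈ H := fun g hg => by
    have hg : g ∈ ((M ⊔ H : Subgroup G) : Set G) := hg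
    rw [Subgroup.normal_mul] at hg
    obtain ⟨m, hm, h, hh, rfl⟩ := Set.mem_mul.1 hg
    exact ⟨⟨m, hm⟩, by simpa using hh⟩
  let r : G ⧸ H → G ⧸ K := Subgroup.quotientMapOfLE hHK
  have hr : ∀ g : G, r (g : G ⧸ H) = (g : G ⧸ K) := fun g => rfl
  have hrsmul : ∀ (g : G) (ω : G ⧸ H), r (g • ω) = g • r ω := fun g ω => by
    induction ω using QuotientGroup.induction_on; rfl
  let ι : Q → G ⧸ H := Quotient.map' (fun m : M => (m : G)) fun a b hab => by
    rw [QuotientGroup.leftRel_apply] at hab ⊢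
    exact hab
  have hι : ∀ m : M, ι (m : M ⧸ H₀) = ((m : G) : G ⧸ H) := fun m => rfl
  have hιinj : Function.Injective ι := fun a b h => by
    induction a using QuotientGroup.induction_on
    induction b using QuotientGroup.induction_on
    rw [hι, hι] at h
    have h' := QuotientGroup.eq.1 h
    exact QuotientGroup.eq.2 (by simpa [H₀, Subgroup.mem_subgroupOf] using h')
  have hιsmul : ∀ (m : M) (q : Q), (m : G) • ι q = ι ((m : M ⧸ H₀) * q) := fun m q => by
    induction q using QuotientGroup.induction_on; rfl
  have hrι : ∀ q : Q, r (ι q) = ((1 : G) : G ⧸ K) := fun q => by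
    induction q using QuotientGroup.induction_on with
    | H m => rw [hι, hr]; exact QuotientGroup.eq.2 (by simpa using hMK m.2)
  have hMfix : ∀ (g : G) (m : M) (y : G ⧸ K), (g * m * g⁻¹) • y = y := fun g m y => by
    induction y using QuotientGroup.induction_on with
    | H z =>
      refine (QuotientGroup.eq.2 (hMK ?_)).symm
      have := hMn.conj_mem _ (hMn.conj_mem m m.2 g) z⁻¹
      simpa [mul_assoc] using this
  have hKpos : K.index ≠ 0 := Subgroup.index_ne_zero_of_finite
  have hHpos : H.index ≠ 0 := Subgroup.index_ne_zero_of_finite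
  have hKlt : K.index < n := by
    rw [← hn]
    refine Subgroup.index_strictAnti (lt_of_le_of_ne hHK fun h => hMH ?_)
    exact h ▸ hMK
  obtain ⟨ordY, hYinj, I, hI, c, e, he, hs⟩ := ih _ hKlt K rfl
  obtain ⟨ordQ, hQinj, hordQ⟩ := exists_order_of_comm _ Q hQc rfl
  have htrans : ∀ y : G ⧸ K, ∃ g : G, g • ((1 : G) : G ⧸ K) = y := fun y =>
    MulAction.exists_smul_eq G _ y
  choose t ht ht' using fun i => exists_coherent_movers (G := G) ordY (fun j => e ⟨i, j⟩)
    (he i) ((1 : G) : G ⧸ K) fun j => htrans _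
  let Φ : (Σ i, Fin (c i) × Q) → G ⧸ H := fun x => t x.1 x.2.1 • ι x.2.2
  have hrΦ : ∀ i j q, r (Φ ⟨i, j, q⟩) = e ⟨i, j⟩ := fun i j q => by
    simp only [Φ]
    rw [hrsmul, hrι, ht]
  have hΦinj : Function.Injective Φ := by
    rintro ⟨i, j, q⟩ ⟨i', j', q'⟩ h
    have h1 := congrArg r h
    rw [hrΦ, hrΦ] at h1
    obtain ⟨rfl, h2⟩ := Sigma.mk.inj (e.injective h1)
    obtain rfl := eq_of_heq h2
    have h3 : ι q = ι q' := smul_left_cancel _ h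
    rw [hιinj h3]
  have hΦsurj : Function.Surjective Φ := by
    intro ω
    induction ω using QuotientGroup.induction_on with
    | H g =>
    obtain ⟨⟨i, j⟩, hij⟩ := e.surjective (g : G ⧸ K)
    have h1 : ((t i j : G) : G ⧸ K) = (g : G ⧸ K) := by
      rw [← hij, ← ht]
      change _ = ((t i j * 1 : G) : G ⧸ K)
      rw [mul_one]
    obtain ⟨m, hm⟩ := hmemK _ (QuotientGroup.eq.1 h1)
    refine ⟨⟨i, j, (m : M ⧸ H₀)⟩, ?_⟩
    refine QuotientGroup.eq.2 ?_
    simpa [mul_assoc] using hm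
  let ψ := Equiv.ofBijective Φ ⟨hΦinj, hΦsurj⟩
  have hψ : ∀ x, ψ x = Φ x := fun x => rfl
  obtain ⟨B, hB⟩ : ∃ B, ∀ q, ordQ q < B := by
    obtain ⟨B, hB⟩ := (Set.finite_range ordQ).bddAbove
    exact ⟨B + 1, fun q => Nat.lt_succ_of_le (hB ⟨q, rfl⟩)⟩
  let ord : G ⧸ H → ℕ := fun ω => ordY (r ω) * B + ordQ (ψ.symm ω).2.2
  have hlt : ∀ i j q i' j' q', ord (Φ ⟨i, j, q⟩) < ord (Φ ⟨i', j', q'⟩) ↔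
      ordY (e ⟨i, j⟩) < ordY (e ⟨i', j'⟩) ∨ e ⟨i, j⟩ = e ⟨i', j'⟩ ∧ ordQ q < ordQ q' := by
    intro i j q i' j' q'
    simp only [ord, hrΦ]
    rw [← hψ, ← hψ, Equiv.symm_apply_apply, Equiv.symm_apply_apply, lex_lt_iff (hB _) (hB _),
      hYinj.eq_iff]
  have hltY : ∀ ω ω', ordY (r ω) < ordY (r ω') → ord ω < ord ω' := by
    intro ω ω' h
    obtain ⟨⟨i, j, q⟩, rfl⟩ := hΦsurj ω
    obtain ⟨⟨i', j', q'⟩, rfl⟩ := hΦsurj ω'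
    rw [hrΦ, hrΦ] at h
    exact (hlt _ _ _ _ _ _).2 (.inl h)
  refine ⟨ord, ?_, ?_⟩
  · intro ω ω' h
    obtain ⟨⟨i, j, q⟩, rfl⟩ := hΦsurj ω
    obtain ⟨⟨i', j', q'⟩, rfl⟩ := hΦsurj ω'
    have h1 := (hlt i j q i' j' q').not.1 h.not_lt
    have h2 := (hlt i' j' q' i j q).not.1 h.not_gt
    push Not at h1 h2
    have h3 := hYinj (le_antisymm h2.1 h1.1)
    have h4 := hQinj (le_antisymm (h2.2 h3.symm) (h1.2 h3))
    obtain ⟨rfl, h5⟩ := Sigma.mk.inj (e.injective h3)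
    obtain rfl := eq_of_heq h5
    rw [h4]
  -- `IsMover` conditions are checked separately on lower blocks and inside the block.
  have hmover : ∀ (g : G) i j q i' j' q', Φ ⟨i', j', q'⟩ = g • Φ ⟨i, j, q⟩ →
      (∀ y, ordY y < ordY (e ⟨i, j⟩) → ordY (g • y) < ordY (e ⟨i', j'⟩)) →
      (∀ x, ordQ x < ordQ q → ord (g • Φ ⟨i, j, x⟩) < ord (Φ ⟨i', j', q'⟩)) →
      IsMover ord g (Φ ⟨i, j, q⟩) (Φ ⟨i', j', q'⟩) := by
    intro g i j q i' j' q' h1 h2 h3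
    refine ⟨h1.symm, fun γ hγ => ?_⟩
    obtain ⟨⟨i₁, j₁, x⟩, rfl⟩ := hΦsurj γ
    rcases (hlt _ _ _ _ _ _).1 hγ with h | ⟨h, h'⟩
    · refine hltY _ _ ?_
      rw [hrsmul, hrΦ, hrΦ]
      exact h2 _ h
    · obtain ⟨rfl, h5⟩ := Sigma.mk.inj (e.injective h)
      obtain rfl := eq_of_heq h5
      exact h3 _ h'
  refine ChainBound.sigma (fun i => hordQ (c i)) ψ ?_ ?_
  · rintro i ⟨j, q⟩ ⟨j', q'⟩ ⟨hj, ⟨gQ, hgQ, hgQ'⟩⟩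
    obtain ⟨m, rfl⟩ := QuotientGroup.mk_surjective gQ
    have hgQ : (m : M ⧸ H₀) * q = q' := hgQ
    refine ⟨_, IsMover.mul (β := Φ ⟨i, j', q⟩)
      (hmover (t i j' * m * (t i j')⁻¹) _ _ _ _ _ _ ?_ ?_ ?_)
      (hmover (t i j' * (t i j)⁻¹) _ _ _ _ _ _ ?_ (ht' i j j' hj).2 ?_)⟩
    · simp only [Φ, ← mul_smul, inv_mul_cancel_right]
      rw [mul_smul, hιsmul, hgQ]
    · intro y hy
      rwa [hMfix]
    · intro x hx
      have : (t i j' * (m : G) * (t i j')⁻¹) • Φ ⟨i, j', x⟩ = Φ ⟨i, j', (m : M ⧸ H₀) * x⟩ := by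
        simp only [Φ, ← mul_smul, inv_mul_cancel_right]
        rw [mul_smul, hιsmul]
      rw [this]
      exact (hlt _ _ _ _ _ _).2 (.inr ⟨rfl, hgQ' _ hx⟩)
    · simp only [Φ, ← mul_smul, inv_mul_cancel_right]
    · intro x hx
      have : (t i j' * (t i j)⁻¹) • Φ ⟨i, j, x⟩ = Φ ⟨i, j', x⟩ := by
        simp only [Φ, ← mul_smul, inv_mul_cancel_right]
      rw [this]
      exact (hlt _ _ _ _ _ _).2 (.inr ⟨rfl, hx⟩)
  · intro k
    have hcard : n = K.index * Nat.card Q := by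
      have h1 : Nat.card (Σ i, Fin (c i) × Q) = n := by
        rw [Nat.card_congr ψ, ← hn]; rfl
      rw [← h1, ← Nat.card_congr (Equiv.sigmaProdDistrib (fun i => Fin (c i)) Q), Nat.card_prod,
        Nat.card_congr e]
      rfl
    have hQpos : Nat.card Q ≠ 0 := Nat.card_pos.ne'
    rw [← Finset.mul_sum]
    refine (mul_le_mul_of_nonneg_left (hs (k + Kfun (Nat.card Q))) (by positivity)).trans
      (le_of_eq ?_)
    have hKf : Kfun n = Kfun K.index + Kfun (Nat.card Q) := by
      rw [hcard, Kfun_mul hKpos hQpos]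
    beta_reduce
    rw [hKf, show k + Kfun (Nat.card Q) + Kfun K.index =
      k + (Kfun K.index + Kfun (Nat.card Q)) by ring, pow_add]
    have : (n : ℝ) = K.index * Nat.card Q := by rw [← Nat.cast_mul, ← hcard]
    rw [this]
    field_simp

section OrbitSpan

variable (N F : Type*) {W : Type*} [Group N] [Field F] [AddCommGroup W] [Module F W]
  [DistribMulAction N W]

/-- The `N`-submodule generated by `T`. -/
def orbitSpan (T : Set W) : Submodule F W :=
  Submodule.span F {w : W | ∃ g : N, ∃ t ∈ T, w = g • t}

variable {N F}

lemma subset_orbitSpan (T : Set W) : T ⊆ orbitSpan N F T := fun t ht =>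
  Submodule.subset_span ⟨1, t, ht, (one_smul N t).symm⟩

lemma orbitSpan_mono {T T' : Set W} (h : T ⊆ T') : orbitSpan N F T ≤ orbitSpan N F T' :=
  Submodule.span_mono fun _ ⟨g, t, ht, hw⟩ => ⟨g, t, h ht, hw⟩

lemma orbitSpan_le {T : Set W} {S : Submodule F W} (hS : ∀ g : N, ∀ w ∈ S, g • w ∈ S)
    (h : T ⊆ S) : orbitSpan N F T ≤ S :=
  Submodule.span_le.2 fun _ ⟨g, _, ht, hw⟩ => hw ▸ hS g _ (h ht)

lemma smul_mem_orbitSpan [SMulCommClass N F W] {T : Set W} (g : N) {w : W}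
    (hw : w ∈ orbitSpan N F T) : g • w ∈ orbitSpan N F T := by
  refine Submodule.span_induction (p := fun w _ => g • w ∈ orbitSpan N F T) ?_ ?_ ?_ ?_ hw
  · rintro _ ⟨g', t, ht, rfl⟩
    exact Submodule.subset_span ⟨g * g', t, ht, (mul_smul _ _ _).symm⟩
  · rw [smul_zero]; exact zero_mem _
  · intro x y _ _ hx hy
    rw [smul_add]; exact add_mem hx hy
  · intro c x _ hx
    rw [smul_comm]; exact Submodule.smul_mem _ _ hx

end OrbitSpan

lemma exists_finset_le_sup_span {F W : Type*} [Field F] [AddCommGroup W] [Module F W]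
    {A B : Submodule F W} [FiniteDimensional F B] (h : A ≤ B) :
    ∃ X : Finset W, (X : Set W) ⊆ B ∧ X.card + Module.finrank F A ≤ Module.finrank F B ∧
      B ≤ A ⊔ Submodule.span F X := by
  classical
  obtain ⟨C, hC⟩ := Submodule.exists_isCompl A
  have : FiniteDimensional F A := Submodule.finiteDimensional_of_le h
  have : FiniteDimensional F (C ⊓ B : Submodule F W) :=
    Submodule.finiteDimensional_of_le inf_le_right
  have hsup : A ⊔ C ⊓ B = B := by
    rw [← sup_inf_assoc_of_le C h, hC.sup_eq_top, top_inf_eq]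
  have hdim := Submodule.finrank_sup_add_finrank_inf_eq A (C ⊓ B)
  rw [hsup, ← inf_assoc, hC.inf_eq_bot, bot_inf_eq, finrank_bot] at hdim
  let b := Module.finBasis F (C ⊓ B : Submodule F W)
  have hspan : Submodule.span F (Set.range fun i => (b i : W)) = C ⊓ B := by
    have := congrArg (Submodule.map (C ⊓ B).subtype) b.span_eq
    rw [Submodule.map_span, ← Set.range_comp, Submodule.map_top, Submodule.range_subtype] at this
    exact this
  refine ⟨Finset.univ.image fun i => (b i : W), ?_, ?_, ?_⟩
  · intro x hx
    obtain ⟨i, -, rfl⟩ := Finset.mem_image.1 hx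
    exact (b i).2.2
  · have := Finset.card_image_le (s := Finset.univ) (f := fun i => (b i : W))
    rw [Finset.card_univ, Fintype.card_fin] at this
    omega
  · rw [Finset.coe_image, Finset.coe_univ, Set.image_univ, hspan, hsup]

section LeadSpace

variable {N F W Ω : Type*} [Group N] [Field F] [AddCommGroup W] [Module F W]
  [DistribMulAction N W]

/-- The leading coordinates at `ω` of those `w ∈ T` whose coordinates above `ω` vanish. -/
def leadSpace (ord : Ω → ℕ) (π : Ω → W →ₗ[F] W) (ω : Ω) (T : Submodule F W) : Submodule F W :=
  (T ⊓ ⨅ (ω' : Ω) (_ : ord ω < ord ω'), LinearMap.ker (π ω')).map (π ω)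

lemma mem_leadSpace {ord : Ω → ℕ} {π : Ω → W →ₗ[F] W} {ω : Ω} {T : Submodule F W} {x : W} :
    x ∈ leadSpace ord π ω T ↔
      ∃ w ∈ T, (∀ ω', ord ω < ord ω' → π ω' w = 0) ∧ π ω w = x := by
  simp [leadSpace, and_assoc]

lemma leadSpace_mono {ord : Ω → ℕ} {π : Ω → W →ₗ[F] W} {ω : Ω} {T T' : Submodule F W}
    (h : T ≤ T') : leadSpace ord π ω T ≤ leadSpace ord π ω T' :=
  Submodule.map_mono (inf_le_inf_right _ h)

lemma leadSpace_le_range {ord : Ω → ℕ} {π : Ω → W →ₗ[F] W} {ω : Ω} {T : Submodule F W} :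
    leadSpace ord π ω T ≤ LinearMap.range (π ω) :=
  LinearMap.map_le_range

lemma IsMover.smul_mem_leadSpace [MulAction N Ω] {ord : Ω → ℕ}
    (hord : Function.Injective ord)
    {π : Ω → W →ₗ[F] W} (hπ : ∀ (g : N) ω w, π (g • ω) (g • w) = g • π ω w)
    {g : N} {α β : Ω} (hg : IsMover ord g α β) {T : Submodule F W}
    (hT : ∀ g : N, ∀ w ∈ T, g • w ∈ T) {x : W} (hx : x ∈ leadSpace ord π α T) :
    g • x ∈ leadSpace ord π β T := by
  obtain ⟨w, hw, hw', rfl⟩ := mem_leadSpace.1 hx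
  refine mem_leadSpace.2 ⟨g • w, hT g w hw, fun ω' hω' => ?_, ?_⟩
  · rw [← smul_inv_smul g ω', hπ]
    rcases lt_trichotomy (ord α) (ord (g⁻¹ • ω')) with h | h | h
    · rw [hw' _ h, smul_zero]
    · rw [← hg.1, hord h, smul_inv_smul] at hω'
      exact absurd hω' (lt_irrefl _)
    · have := hg.2 _ h
      rw [smul_inv_smul] at this
      exact absurd hω' this.not_gt
  · rw [← hg.1, hπ]

lemma IsMover.finrank_leadSpace_le [SMulCommClass N F W] [MulAction N Ω] {ord : Ω → ℕ}
    (hord : Function.Injective ord)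
    {π : Ω → W →ₗ[F] W} (hπ : ∀ (g : N) ω w, π (g • ω) (g • w) = g • π ω w)
    [∀ ω, FiniteDimensional F (LinearMap.range (π ω))]
    {g : N} {α β : Ω} (hg : IsMover ord g α β) {T : Submodule F W}
    (hT : ∀ g : N, ∀ w ∈ T, g • w ∈ T) :
    Module.finrank F (leadSpace ord π α T) ≤ Module.finrank F (leadSpace ord π β T) := by
  have : FiniteDimensional F (leadSpace ord π β T) :=
    Submodule.finiteDimensional_of_le leadSpace_le_range
  have hinj : Function.Injective (DistribSMul.toLinearMap F W g) := MulAction.injective g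
  rw [(Submodule.equivMapOfInjective _ hinj (leadSpace ord π α T)).finrank_eq]
  refine Submodule.finrank_mono (Submodule.map_le_iff_le_comap.2 fun x hx => ?_)
  exact hg.smul_mem_leadSpace hord hπ hT hx

variable (N) in
lemma exists_finset_leadSpace_le {ord : Ω → ℕ} {π : Ω → W →ₗ[F] W}
    [∀ ω, FiniteDimensional F (LinearMap.range (π ω))]
    {S : Submodule F W} (hS : ∀ g : N, ∀ w ∈ S, g • w ∈ S) {T : Finset W}
    (hT : (T : Set W) ⊆ S) (ω : Ω) :
    ∃ T' : Finset W, T ⊆ T' ∧ (T' : Set W) ⊆ S ∧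
      T'.card + Module.finrank F (leadSpace ord π ω (orbitSpan N F (T : Set W))) ≤
        T.card + Module.finrank F (leadSpace ord π ω S) ∧
      leadSpace ord π ω S ≤ leadSpace ord π ω (orbitSpan N F (T' : Set W)) := by
  classical
  have : FiniteDimensional F (leadSpace ord π ω S) :=
    Submodule.finiteDimensional_of_le leadSpace_le_range
  obtain ⟨X, hXS, hX, hXsup⟩ := exists_finset_le_sup_span
    (leadSpace_mono (ord := ord) (π := π) (ω := ω) (orbitSpan_le hS hT))
  choose! f hf hf' hf'' using fun x hx => mem_leadSpace.1 (hXS (a := x) hx)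
  refine ⟨T ∪ X.image f, Finset.subset_union_left, ?_, ?_, hXsup.trans (sup_le ?_ ?_)⟩
  · rw [Finset.coe_union, Finset.coe_image]
    refine Set.union_subset hT ?_
    rintro _ ⟨x, hx, rfl⟩
    exact hf x hx
  · have := Finset.card_union_le T (X.image f)
    have := Finset.card_image_le (s := X) (f := f)
    omega
  · exact leadSpace_mono (orbitSpan_mono (by simp))
  · refine Submodule.span_le.2 fun x hx => mem_leadSpace.2 ⟨f x, ?_, hf' x hx, hf'' x hx⟩
    refine subset_orbitSpan _ ?_
    rw [Finset.coe_union, Finset.coe_image]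
    exact .inr ⟨x, hx, rfl⟩

lemma exists_finset_leadSpace_le_of_chain [SMulCommClass N F W] [MulAction N Ω] {ord : Ω → ℕ}
    (hord : Function.Injective ord)
    {π : Ω → W →ₗ[F] W} (hπ : ∀ (g : N) ω w, π (g • ω) (g • w) = g • π ω w)
    [∀ ω, FiniteDimensional F (LinearMap.range (π ω))] {a : ℕ}
    (ha : ∀ ω, Module.finrank F (LinearMap.range (π ω)) ≤ a)
    {S : Submodule F W} (hS : ∀ g : N, ∀ w ∈ S, g • w ∈ S) {c : ℕ} (x : Fin c → Ω)
    (hx : ∀ j j', j ≤ j' → ∃ g : N, IsMover ord g (x j) (x j')) :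
    ∃ T : Finset W, (T : Set W) ⊆ S ∧ (T.card : ℤ) ≤ a * walkSum 0 c ∧
      ∀ j, leadSpace ord π (x j) S ≤ leadSpace ord π (x j) (orbitSpan N F (T : Set W)) := by
  rcases c with _ | c
  · exact ⟨∅, by simp, by simp [walkSum], fun j => j.elim0⟩
  have key : ∀ m : Fin (c + 1), ∃ T : Finset W, (T : Set W) ⊆ S ∧
      T.card ≤ Module.finrank F (leadSpace ord π (x m) S) ∧
      ∀ j ≤ m, leadSpace ord π (x j) S ≤ leadSpace ord π (x j) (orbitSpan N F (T : Set W)) := by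
    intro m
    induction m using Fin.induction with
    | zero =>
      obtain ⟨T, -, hTS, hT, hle⟩ := exists_finset_leadSpace_le N (ord := ord) (π := π) hS
        (T := ∅) (by simp) (x 0)
      refine ⟨T, hTS, ?_, fun j hj => ?_⟩
      · rw [Finset.card_empty] at hT; omega
      · rw [Fin.le_zero_iff.1 hj]; exact hle
    | succ m ih =>
      obtain ⟨T, hTS, hT, hle⟩ := ih
      obtain ⟨T', hTT', hTS', hT', hle'⟩ := exists_finset_leadSpace_le N (ord := ord) (π := π) hS
        hTS (x m.succ)
      refine ⟨T', hTS', ?_, fun j hj => ?_⟩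
      · have h1 : Module.finrank F (leadSpace ord π (x m.castSucc) S) ≤
            Module.finrank F (leadSpace ord π (x m.castSucc) (orbitSpan N F (T : Set W))) := by
          have := Submodule.finiteDimensional_of_le (leadSpace_le_range (ord := ord) (π := π)
            (ω := x m.castSucc) (T := orbitSpan N F (T : Set W)))
          exact Submodule.finrank_mono (hle _ le_rfl)
        obtain ⟨g, hg⟩ := hx m.castSucc m.succ (Fin.castSucc_lt_succ).le
        have h2 := hg.finrank_leadSpace_le hord hπ (T := orbitSpan N F (T : Set W))
          fun g w hw => smul_mem_orbitSpan g hw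
        omega
      · rcases hj.lt_or_eq with h | rfl
        · exact (hle j (Fin.le_castSucc_iff.2 h)).trans (leadSpace_mono (orbitSpan_mono hTT'))
        · exact hle'
  obtain ⟨T, hTS, hT, hle⟩ := key (Fin.last c)
  refine ⟨T, hTS, ?_, fun j => hle j (Fin.le_last j)⟩
  have h1 := hT.trans ((Submodule.finrank_mono leadSpace_le_range).trans (ha _))
  have h2 : walkSum 0 ((c + 1 : ℕ) : ℤ) = 1 := by
    simp only [walkSum]
    exact Int.sign_eq_one_of_pos (by omega)
  rw [h2, mul_one]
  exact_mod_cast h1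

lemma eq_orbitSpan_of_leadSpace_le [Finite Ω] {ord : Ω → ℕ} (hord : Function.Injective ord)
    {π : Ω → W →ₗ[F] W} (hπ : ∀ w, (∀ ω, π ω w = 0) → w = 0)
    {S : Submodule F W} (hS : ∀ g : N, ∀ w ∈ S, g • w ∈ S) {T : Set W} (hT : T ⊆ S)
    (h : ∀ ω, leadSpace ord π ω S ≤ leadSpace ord π ω (orbitSpan N F T)) :
    orbitSpan N F T = S := by
  refine le_antisymm (orbitSpan_le hS hT) ?_
  have key : ∀ m : ℕ, ∀ w ∈ S, (∀ ω, m ≤ ord ω → π ω w = 0) → w ∈ orbitSpan N F T := by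
    intro m
    induction m with
    | zero =>
      intro w _ hw
      rw [hπ w fun ω => hw ω (Nat.zero_le _)]
      exact zero_mem _
    | succ m ih =>
      intro w hwS hw
      by_cases hm : ∃ ω, ord ω = m
      · obtain ⟨ω, rfl⟩ := hm
        obtain ⟨v, hv, hv', hvw⟩ := mem_leadSpace.1 (h ω (mem_leadSpace.2
          ⟨w, hwS, fun ω' hω' => hw ω' hω', rfl⟩))
        rw [← sub_add_cancel w v]
        refine add_mem (ih _ (sub_mem hwS (orbitSpan_le hS hT hv)) fun ω' hω' => ?_) hv
        rw [map_sub, sub_eq_zero]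
        rcases hω'.lt_or_eq with h' | h'
        · rw [hw ω' h', hv' ω' h']
        · rw [← hord h', hvw]
      · refine ih w hwS fun ω hω => hw ω ?_
        exact lt_of_le_of_ne hω fun h => hm ⟨ω, h.symm⟩
  intro w hw
  obtain ⟨B, hB⟩ := (Set.finite_range ord).bddAbove
  exact key (B + 1) w hw fun ω hω => absurd (hB ⟨ω, rfl⟩) (by omega)

theorem ChainBound.exists_finset_orbitSpan_eq [SMulCommClass N F W] [MulAction N Ω]
    [Finite Ω] {ord : Ω → ℕ}
    (hord : Function.Injective ord)
    {π : Ω → W →ₗ[F] W} (hπ : ∀ (g : N) ω w, π (g • ω) (g • w) = g • π ω w)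
    (hπ' : ∀ w, (∀ ω, π ω w = 0) → w = 0)
    [∀ ω, FiniteDimensional F (LinearMap.range (π ω))] {a : ℕ}
    (ha : ∀ ω, Module.finrank F (LinearMap.range (π ω)) ≤ a)
    {S : Submodule F W} (hS : ∀ g : N, ∀ w ∈ S, g • w ∈ S) {b : ℕ → ℝ}
    (hb : ChainBound (fun α β => ∃ g : N, IsMover ord g α β) b) :
    ∃ T : Finset W, (T : Set W) ⊆ S ∧ (T.card : ℝ) ≤ a * b 0 ∧
      orbitSpan N F (T : Set W) = S := by
  classical
  obtain ⟨I, _, c, e, he, hs⟩ := hb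
  choose T hTS hT hle using fun i => exists_finset_leadSpace_le_of_chain hord hπ ha hS
    (fun j => e ⟨i, j⟩) (he i)
  refine ⟨Finset.univ.biUnion T, ?_, ?_, ?_⟩
  · rw [Finset.coe_biUnion]
    exact Set.iUnion₂_subset fun i _ => hTS i
  · refine le_trans ?_ (mul_le_mul_of_nonneg_left (hs 0) (Nat.cast_nonneg a))
    rw [Finset.mul_sum]
    have h1 : ((Finset.univ.biUnion T).card : ℝ) ≤ ∑ i, ((T i).card : ℝ) := by
      exact_mod_cast Finset.card_biUnion_le
    refine h1.trans (Finset.sum_le_sum fun i _ => ?_)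
    exact_mod_cast hT i
  · refine eq_orbitSpan_of_leadSpace_le hord hπ' hS ?_ fun ω => ?_
    · rw [Finset.coe_biUnion]
      exact Set.iUnion₂_subset fun i _ => hTS i
    · obtain ⟨⟨i, j⟩, rfl⟩ := e.surjective ω
      refine (hle i j).trans (leadSpace_mono (orbitSpan_mono ?_))
      exact_mod_cast Finset.subset_biUnion_of_mem T (Finset.mem_univ i)

end LeadSpace

section Hall

lemma exists_normal_pGroup_or_not_dvd_card {G : Type*} [Group G] [Finite G] [Group.IsSolvable G]
    [Nontrivial G] (p : ℕ) [Fact p.Prime] :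
    ∃ M : Subgroup G, M.Normal ∧ M ≠ ⊥ ∧ (IsPGroup p M ∨ ¬ p ∣ Nat.card M) := by
  obtain ⟨M, hM, hM1, hM2⟩ := exists_normal_not_le_commutator_le (bot_ne_top : (⊥ : Subgroup G) ≠ ⊤)
  by_cases hp : p ∣ Nat.card M
  swap
  · exact ⟨M, hM, fun h => hM1 h.le, .inr hp⟩
  have hcomm : ∀ x ∈ M, ∀ y ∈ M, Commute x y := fun x hx y hy => by
    have := hM2 (Subgroup.commutator_mem_commutator hx hy)
    exact commutatorElement_eq_one_iff_commute.1 (Subgroup.mem_bot.1 this)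
  let P : Subgroup G :=
    { carrier := {x | x ∈ M ∧ x ^ p = 1}
      mul_mem' := fun {x y} hx hy =>
        ⟨mul_mem hx.1 hy.1, by rw [(hcomm x hx.1 y hy.1).mul_pow, hx.2, hy.2, one_mul]⟩
      one_mem' := ⟨one_mem M, one_pow p⟩
      inv_mem' := fun {x} hx => ⟨inv_mem hx.1, by rw [inv_pow, hx.2, inv_one]⟩ }
  refine ⟨P, ⟨fun x hx g => ⟨hM.conj_mem x hx.1 g, ?_⟩⟩, ?_, .inl fun x => ⟨1, ?_⟩⟩
  · rw [conj_pow, hx.2, mul_one, mul_inv_cancel]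
  · obtain ⟨x, hx⟩ := exists_prime_orderOf_dvd_card' p hp
    rw [Subgroup.ne_bot_iff_exists_ne_one]
    have hx' : (x : G) ^ p = 1 := by
      rw [← hx, ← SubgroupClass.coe_pow, pow_orderOf_eq_one, OneMemClass.coe_one]
    refine ⟨⟨x, x.2, hx'⟩, fun h => (Fact.out : p.Prime).one_lt.ne' ?_⟩
    rw [← hx, orderOf_eq_one_iff]
    exact Subtype.ext (congrArg (Subtype.val : P → G) h)
  · rw [pow_one]
    exact Subtype.ext x.2.2

theorem exists_subgroup_not_dvd_card_index_eq_pow {G : Type*} [Group G] [Finite G]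
    [Group.IsSolvable G] (p : ℕ) [hp : Fact p.Prime] :
    ∃ Q : Subgroup G, ¬ p ∣ Nat.card Q ∧ ∃ k, Q.index = p ^ k := by
  induction hc : Nat.card G using Nat.strong_induction_on generalizing G with
  | h c ih =>
  rcases subsingleton_or_nontrivial G with hG | hG
  · exact ⟨⊤, by simpa using hp.out.one_lt.ne', 0, by simp⟩
  obtain ⟨M, hM, hM1, hM2⟩ := exists_normal_pGroup_or_not_dvd_card (G := G) p
  have hMc : Nat.card (G ⧸ M) * Nat.card M = c := by
    rw [← hc]; exact (Subgroup.card_eq_card_quotient_mul_card_subgroup M).symm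
  have hMone : 1 < Nat.card M := (Subgroup.one_lt_card_iff_ne_bot M).2 hM1
  obtain ⟨Q, hQ, k, hk⟩ := ih (Nat.card (G ⧸ M))
    (by have : 0 < Nat.card (G ⧸ M) := Nat.card_pos
        rw [← hMc]; nlinarith) (G := G ⧸ M) rfl
  let K := Q.comap (QuotientGroup.mk' M)
  have hKi : K.index = p ^ k := by
    rw [← hk, Subgroup.index_comap_of_surjective _ (QuotientGroup.mk'_surjective M)]
  have hKc : Nat.card K = Nat.card Q * Nat.card M := by
    have h1 := K.card_mul_index
    have h2 := Q.card_mul_index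
    rw [hKi, hc, ← hMc, ← h2, hk] at h1
    have : 0 < p ^ k := pow_pos hp.out.pos k
    exact Nat.eq_of_mul_eq_mul_right this (by linarith)
  rcases hM2 with hM2 | hM2
  · obtain ⟨j, hj⟩ := hM2.exists_card_eq
    have hMK : M ≤ K := fun x hx => by
      have : (x : G ⧸ M) = 1 := (QuotientGroup.eq_one_iff x).2 hx
      simp [K, this]
    have hcM : Nat.card (M.subgroupOf K) = Nat.card M :=
      Nat.card_congr (Subgroup.subgroupOfEquivOfLe hMK).toEquiv
    have hiM : (M.subgroupOf K).index = Nat.card Q := by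
      have h1 := (M.subgroupOf K).card_mul_index
      rw [hcM, hKc, mul_comm (Nat.card Q)] at h1
      exact Nat.eq_of_mul_eq_mul_left (by omega) h1
    obtain ⟨R, hR⟩ := Subgroup.exists_right_complement'_of_coprime (N := M.subgroupOf K) (by
      rw [hcM, hiM, hj]
      exact Nat.Coprime.pow_left _ ((Nat.Prime.coprime_iff_not_dvd hp.out).2 hQ))
    have hRc : Nat.card R = Nat.card Q := by
      rw [← hiM]; exact hR.symm.index_eq_card.symm
    refine ⟨R.map K.subtype, ?_, j + k, ?_⟩
    · rwa [Subgroup.card_map_of_injective K.subtype_injective, hRc]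
    · have h1 := (R.map K.subtype).card_mul_index
      rw [Subgroup.card_map_of_injective K.subtype_injective, hRc, ← K.card_mul_index, hKc, hKi,
        hj, mul_assoc, ← pow_add] at h1
      exact Nat.eq_of_mul_eq_mul_left Nat.card_pos h1
  · refine ⟨K, ?_, k, hKi⟩
    rw [hKc, hp.out.dvd_mul]
    tauto

lemma card_orbits_le_pow {N Ω : Type*} [Group N] [MulAction N Ω] [MulAction.IsPretransitive N Ω]
    [Finite Ω] [Nonempty Ω] {p : ℕ} (hp : p.Prime) {Q : Subgroup N} {k : ℕ}
    (hQ : Q.index = p ^ k) :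
    Nat.card (MulAction.orbitRel.Quotient Q Ω) ≤ p ^ (Nat.card Ω).factorization p := by
  classical
  set n := Nat.card Ω with hn
  have hn0 : n ≠ 0 := Nat.card_pos.ne'
  have hdvd : ∀ ω : Ω, ordCompl[p] n ∣ Nat.card (MulAction.orbit Q ω) := by
    intro ω
    have h1 : (MulAction.stabilizer N ω).index = n := MulAction.index_stabilizer_of_transitive N ω
    have h2 : (MulAction.stabilizer N ω).relIndex Q = Nat.card (MulAction.orbit Q ω) := by
      rw [Nat.card_coe_set_eq, ← MulAction.index_stabilizer]
      rfl
    have h3 : n ∣ Nat.card (MulAction.orbit Q ω) * p ^ k := by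
      rw [← h1, ← h2, ← hQ, ← Subgroup.inf_relIndex_right, Subgroup.relIndex_mul_index inf_le_right]
      exact Subgroup.index_dvd_of_le inf_le_left
    refine Nat.Coprime.dvd_of_dvd_mul_right ?_ ((Nat.ordCompl_dvd n p).trans h3)
    exact (Nat.Coprime.pow_left k (Nat.coprime_ordCompl hp hn0)).symm
  have : Fintype (MulAction.orbitRel.Quotient Q Ω) := Fintype.ofFinite _
  have hsum : n = ∑ x : MulAction.orbitRel.Quotient Q Ω,
      Nat.card (MulAction.orbitRel.Quotient.orbit x) := by
    rw [hn, Nat.card_congr (MulAction.selfEquivSigmaOrbits' Q Ω), Nat.card_sigma]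
  have hle : Nat.card (MulAction.orbitRel.Quotient Q Ω) * ordCompl[p] n ≤ n := by
    conv_rhs => rw [hsum]
    rw [Nat.card_eq_fintype_card, ← Finset.card_univ, ← smul_eq_mul]
    refine Finset.card_nsmul_le_sum _ _ _ fun x _ => ?_
    induction x using Quotient.inductionOn' with
    | h ω =>
    rw [MulAction.orbitRel.Quotient.orbit_mk]
    have : Nonempty (MulAction.orbit Q ω) := ⟨⟨ω, MulAction.mem_orbit_self ω⟩⟩
    exact Nat.le_of_dvd Nat.card_pos (hdvd ω)
  conv_rhs at hle => rw [← Nat.ordProj_mul_ordCompl_eq_self n p]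
  exact Nat.le_of_mul_le_mul_right hle (Nat.ordCompl_pos p hn0)

end Hall

section Induced

variable {N F W Ω : Type*} [Group N] [Field F] [AddCommGroup W] [Module F W]
  [DistribMulAction N W] [MulAction N Ω]

lemma exists_equivariant_coordinates {φ : Ω → Submodule F W} (hind : iSupIndep φ)
    (hsup : iSup φ = ⊤) (hφ : ∀ (g : N) ω, ∀ w ∈ φ ω, g • w ∈ φ (g • ω)) :
    ∃ π : Ω → W →ₗ[F] W, (∀ (g : N) ω w, π (g • ω) (g • w) = g • π ω w) ∧
      (∀ w, (∀ ω, π ω w = 0) → w = 0) ∧ ∀ ω, LinearMap.range (π ω) ≤ φ ω := by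
  classical
  have hinternal := DirectSum.isInternal_submodule_of_iSupIndep_of_iSup_eq_top hind hsup
  let e := (LinearEquiv.ofBijective (DirectSum.coeLinearMap φ) hinternal).symm
  let π : Ω → W →ₗ[F] W := fun ω =>
    (φ ω).subtype ∘ₗ DirectSum.component F Ω (fun ω => φ ω) ω ∘ₗ e.toLinearMap
  have hπ : ∀ ω w, π ω w = (e w ω : W) := fun ω w => rfl
  have hself : ∀ ω, ∀ w ∈ φ ω, π ω w = w := fun ω w hw => by
    rw [hπ]
    exact congrArg Subtype.val (hinternal.ofBijective_coeLinearMap_of_mem hw)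
  have hne : ∀ ω ω', ω ≠ ω' → ∀ w ∈ φ ω, π ω' w = 0 := fun ω ω' h w hw => by
    rw [hπ]
    exact congrArg Subtype.val (hinternal.ofBijective_coeLinearMap_of_mem_ne h hw)
  refine ⟨π, fun g ω w => ?_, fun w hw => ?_, ?_⟩
  · have hw : w ∈ iSup φ := hsup ▸ Submodule.mem_top
    induction hw using Submodule.iSup_induction' with
    | mem ω' x hx =>
      by_cases h : ω' = ω
      · subst h
        rw [hself _ _ hx, hself _ _ (hφ g _ _ hx)]
      · rw [hne _ _ h _ hx, hne _ _ (fun h' => h (smul_left_cancel g h')) _ (hφ g _ _ hx),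
          smul_zero]
    | zero => simp
    | add x y _ _ hx hy => simp only [smul_add, map_add, hx, hy]
  · refine e.map_eq_zero_iff.1 (DFinsupp.ext fun ω => Subtype.ext (hw ω))
  · rintro ω _ ⟨w, rfl⟩
    exact (e w ω).2

lemma exists_finset_orbitSpan_eq_top [SMulCommClass N F W] [Finite Ω] {φ : Ω → Submodule F W}
    (hsup : iSup φ = ⊤) (hφ : ∀ (g : N) ω, ∀ w ∈ φ ω, g • w ∈ φ (g • ω))
    [∀ ω, FiniteDimensional F (φ ω)] {a : ℕ} (ha : ∀ ω, Module.finrank F (φ ω) ≤ a) :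
    ∃ T : Finset W, T.card ≤ a * Nat.card (MulAction.orbitRel.Quotient N Ω) ∧
      orbitSpan N F (T : Set W) = ⊤ := by
  classical
  have : Fintype (MulAction.orbitRel.Quotient N Ω) := Fintype.ofFinite _
  choose X _ hX hX' using fun ω => exists_finset_le_sup_span (bot_le (a := φ ω))
  simp only [finrank_bot, add_zero, bot_sup_eq] at hX hX'
  refine ⟨Finset.univ.biUnion fun x : MulAction.orbitRel.Quotient N Ω => X x.out, ?_, ?_⟩
  · refine Finset.card_biUnion_le.trans ?_
    rw [Nat.card_eq_fintype_card, ← Finset.card_univ, mul_comm, ← smul_eq_mul]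
    exact Finset.sum_le_card_nsmul _ _ _ fun x _ => (hX _).trans (ha _)
  · rw [eq_top_iff, ← hsup, iSup_le_iff]
    intro ω w hw
    obtain ⟨g, hg⟩ : ∃ g : N, g • (Quotient.mk'' ω : MulAction.orbitRel.Quotient N Ω).out = ω :=
      MulAction.orbitRel_apply.1 ((MulAction.orbitRel N Ω).symm
        (Quotient.mk_out (s := MulAction.orbitRel N Ω) ω))
    set ρ := (Quotient.mk'' ω : MulAction.orbitRel.Quotient N Ω).out with hρ
    have hspan : φ ρ ≤ orbitSpan N F
        ((Finset.univ.biUnion fun x : MulAction.orbitRel.Quotient N Ω => X x.out : Finset W) :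
          Set W) := by
      refine (hX' ρ).trans (Submodule.span_le.2 (Set.Subset.trans ?_ (subset_orbitSpan _)))
      exact_mod_cast Finset.subset_biUnion_of_mem
        (fun x : MulAction.orbitRel.Quotient N Ω => X x.out) (Finset.mem_univ (Quotient.mk'' ω))
    rw [← smul_inv_smul g w]
    refine smul_mem_orbitSpan g (hspan ?_)
    have := hφ g⁻¹ ω w hw
    rwa [← hg, inv_smul_smul] at this

lemma exists_equivariant_projection [SMulCommClass N F W] [Finite N]
    (hN : (Nat.card N : F) ≠ 0) {S : Submodule F W} (hS : ∀ g : N, ∀ w ∈ S, g • w ∈ S) :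
    ∃ E : W →ₗ[F] W, (∀ (g : N) w, E (g • w) = g • E w) ∧ (∀ w, E w ∈ S) ∧
      ∀ w ∈ S, E w = w := by
  have : Fintype N := Fintype.ofFinite N
  obtain ⟨P, hP⟩ := S.subtype.exists_leftInverse_of_injective (Submodule.ker_subtype S)
  have hP' : ∀ w (hw : w ∈ S), P w = ⟨w, hw⟩ := fun w hw => LinearMap.congr_fun hP ⟨w, hw⟩
  let E : W →ₗ[F] W := (Nat.card N : F)⁻¹ • ∑ g : N,
    DistribSMul.toLinearMap F W g⁻¹ ∘ₗ S.subtype ∘ₗ P ∘ₗ DistribSMul.toLinearMap F W g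
  have hE : ∀ w, E w = (Nat.card N : F)⁻¹ • ∑ g : N, g⁻¹ • (P (g • w) : W) := fun w => by
    simp [E, LinearMap.sum_apply]
  refine ⟨E, fun g w => ?_, fun w => ?_, fun w hw => ?_⟩
  · have h : ∑ x : N, x⁻¹ • (P (x • g • w) : W) = ∑ x : N, g • x⁻¹ • (P (x • w) : W) := by
      refine Fintype.sum_equiv (Equiv.mulRight g) _ _ fun x => ?_
      rw [Equiv.coe_mulRight, ← mul_smul x g w, ← mul_smul, mul_inv_rev, mul_inv_cancel_left]
    rw [hE, hE, h, smul_comm g (Nat.card N : F)⁻¹, ← Finset.smul_sum]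
  · rw [hE]
    exact Submodule.smul_mem _ _ (Submodule.sum_mem _ fun g _ => hS _ _ (P _).2)
  · have h : ∀ g : N, g⁻¹ • (P (g • w) : W) = w := fun g => by
      rw [hP' _ (hS g w hw), inv_smul_smul]
    simp only [hE, h]
    rw [Finset.sum_const, Finset.card_univ, ← Nat.card_eq_fintype_card, ← Nat.cast_smul_eq_nsmul F,
      smul_smul, inv_mul_cancel₀ hN, one_smul]

theorem exists_finset_orbitSpan_eq_of_card_ne_zero [SMulCommClass N F W] [Finite N]
    (hN : (Nat.card N : F) ≠ 0) [Finite Ω] {φ : Ω → Submodule F W}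
    (hsup : iSup φ = ⊤) (hφ : ∀ (g : N) ω, ∀ w ∈ φ ω, g • w ∈ φ (g • ω))
    [∀ ω, FiniteDimensional F (φ ω)] {a : ℕ} (ha : ∀ ω, Module.finrank F (φ ω) ≤ a)
    {S : Submodule F W} (hS : ∀ g : N, ∀ w ∈ S, g • w ∈ S) :
    ∃ T : Finset W, (T : Set W) ⊆ S ∧
      T.card ≤ a * Nat.card (MulAction.orbitRel.Quotient N Ω) ∧
      orbitSpan N F (T : Set W) = S := by
  classical
  obtain ⟨X, hX, hXtop⟩ := exists_finset_orbitSpan_eq_top hsup hφ ha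
  obtain ⟨E, hE, hES, hE'⟩ := exists_equivariant_projection hN hS
  have hTS : ((X.image E : Finset W) : Set W) ⊆ S := by
    rw [Finset.coe_image]
    rintro _ ⟨x, -, rfl⟩
    exact hES x
  refine ⟨X.image E, hTS, Finset.card_image_le.trans hX, le_antisymm (orbitSpan_le hS hTS) ?_⟩
  have hle : orbitSpan N F (X : Set W) ≤
      (orbitSpan N F ((X.image E : Finset W) : Set W)).comap E := by
    refine orbitSpan_le (fun g w hw => ?_) fun x hx => subset_orbitSpan _ ?_
    · rw [Submodule.mem_comap, hE]
      exact smul_mem_orbitSpan g hw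
    · rw [Finset.coe_image]
      exact ⟨x, hx, rfl⟩
  intro w hw
  rw [← hE' w hw]
  exact hle (hXtop ▸ Submodule.mem_top)

theorem exists_finset_orbitSpan_eq_card_le_mul_pow [SMulCommClass N F W] [Finite N]
    [Group.IsSolvable N] [Finite Ω] [Nonempty Ω] [MulAction.IsPretransitive N Ω]
    (p : ℕ) [hp : Fact p.Prime] [CharP F p] {φ : Ω → Submodule F W}
    (hsup : iSup φ = ⊤) (hφ : ∀ (g : N) ω, ∀ w ∈ φ ω, g • w ∈ φ (g • ω))
    [∀ ω, FiniteDimensional F (φ ω)] {a : ℕ} (ha : ∀ ω, Module.finrank F (φ ω) ≤ a)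
    {S : Submodule F W} (hS : ∀ g : N, ∀ w ∈ S, g • w ∈ S) :
    ∃ T : Finset W, (T : Set W) ⊆ S ∧
      (T.card : ℝ) ≤ a * ((p ^ (Nat.card Ω).factorization p : ℕ) : ℝ) ∧
      orbitSpan N F (T : Set W) = S := by
  obtain ⟨Q, hQ, k, hk⟩ := exists_subgroup_not_dvd_card_index_eq_pow (G := N) p
  obtain ⟨T, hTS, hT, hspan⟩ := exists_finset_orbitSpan_eq_of_card_ne_zero (N := Q)
    (fun h => hQ ((CharP.cast_eq_zero_iff F p _).1 h)) hsup (fun g => hφ g) ha (fun g => hS g)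
  refine ⟨T, hTS, ?_, le_antisymm (orbitSpan_le hS hTS) ?_⟩
  · exact_mod_cast hT.trans (Nat.mul_le_mul_left a (card_orbits_le_pow hp.out hk))
  · rw [← hspan]
    exact Submodule.span_mono fun _ ⟨g, t, ht, hw⟩ => ⟨g, t, ht, hw⟩

theorem exists_finset_orbitSpan_eq_card_le_mul_wstar [SMulCommClass N F W] [Finite N]
    [Group.IsSolvable N] {H : Subgroup N} {φ : N ⧸ H → Submodule F W} (hind : iSupIndep φ)
    (hsup : iSup φ = ⊤) (hφ : ∀ (g : N) ω, ∀ w ∈ φ ω, g • w ∈ φ (g • ω))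
    [∀ ω, FiniteDimensional F (φ ω)] {a : ℕ} (ha : ∀ ω, Module.finrank F (φ ω) ≤ a)
    {S : Submodule F W} (hS : ∀ g : N, ∀ w ∈ S, g • w ∈ S) :
    ∃ T : Finset W, (T : Set W) ⊆ S ∧ (T.card : ℝ) ≤ a * wstar H.index ∧
      orbitSpan N F (T : Set W) = S := by
  obtain ⟨ord, hord, hchain⟩ := exists_order_cosets H.index H rfl
  obtain ⟨π, hπ, hπ', hrange⟩ := exists_equivariant_coordinates hind hsup hφ
  have hfin : ∀ ω, FiniteDimensional F (LinearMap.range (π ω)) := fun ω =>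
    Submodule.finiteDimensional_of_le (hrange ω)
  obtain ⟨T, hTS, hT, hspan⟩ := hchain.exists_finset_orbitSpan_eq hord hπ hπ'
    (fun ω => (Submodule.finrank_mono (hrange ω)).trans (ha ω)) hS
  refine ⟨T, hTS, ?_, hspan⟩
  rw [zero_add, walkSum_one] at hT
  rw [wstar]
  exact_mod_cast hT

end Induced

lemma dMod_le_card {G : Type*} [Group G] {F W : Type*} [Field F] [AddCommGroup W]
    [Module F W] [DistribMulAction G W] {S : Submodule F W}
    (hS : ∀ g : G, ∀ w ∈ S, g • w ∈ S) {N : Subgroup G} {T : Finset W} (hTS : (T : Set W) ⊆ S)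
    (hT : orbitSpan N F (T : Set W) = S) : dMod G S ≤ T.card := by
  refine Nat.sInf_le ⟨T, rfl, hTS, le_antisymm (orbitSpan_le (N := G) hS hTS) ?_⟩
  conv_lhs => rw [← hT]
  exact Submodule.span_mono fun _ ⟨g, t, ht, hw⟩ => ⟨g, t, ht, hw⟩

/-- Let `G` be a finite group, `H ≤ G` of index `n ≥ 2`, `F` a field of characteristic
`p > 0`, `V` an `H`-module of finite dimension `a` over `F`, and `S` a submodule of the
induced module `V↑G` (presented internally: `W` is a `G`-module containing an `H`-stable
subspace `V` of dimension `a` such that `W` is the direct sum of the translates `g • V` over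
the cosets `g H ∈ G ⧸ H`).  If `G` contains a soluble subgroup `N` acting transitively on the
set of right cosets of `H` in `G` (i.e. for all `g, g'`, some `x ∈ N` has `Hgx = Hg'`), then
`d_G(S) ≤ a·E_sol(n,p) = a·min{w*(n), n_p}`. -/
theorem stmt_17 (G : Type*) [Group G] [Fintype G]
    (H : Subgroup G) (n : ℕ) (hn : 2 ≤ n) (hidx : H.index = n)
    (F W : Type*) [Field F] (p : ℕ) [Fact p.Prime] (hchar : CharP F p)
    [AddCommGroup W] [Module F W] [DistribMulAction G W] [SMulCommClass G F W]
    (V : Submodule F W) [FiniteDimensional F V] (a : ℕ) (ha : Module.finrank F V = a)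
    (hVstable : ∀ g ∈ H, ∀ v ∈ V, g • v ∈ V)
    (hinduced : ∃ φ : G ⧸ H → Submodule F W,
      (∀ g : G, φ (g : G ⧸ H) = V.map (DistribMulAction.toLinearMap F W g)) ∧
        iSupIndep φ ∧ iSup φ = ⊤)
    (N : Subgroup G) (hNsol : IsSolvable N)
    (hNtrans : ∀ g g' : G, ∃ x ∈ N, g * x * g'⁻¹ ∈ H)
    (S : Submodule F W) (hSstable : ∀ g : G, ∀ w ∈ S, g • w ∈ S) :
    (dMod G S : ℝ) ≤ a * min (wstar n) ((p ^ n.factorization p : ℕ) : ℝ) := by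
  obtain ⟨φ, hφ, hind, hsup⟩ := hinduced
  have : Group.IsSolvable N := hNsol
  let j : N ⧸ H.subgroupOf N → G ⧸ H := Quotient.map' (fun x : N => (x : G)) fun x y hxy => by
    rw [QuotientGroup.leftRel_apply] at hxy ⊢
    exact hxy
  have hj : ∀ x : N, j (x : N ⧸ H.subgroupOf N) = ((x : G) : G ⧸ H) := fun x => rfl
  have hjinj : Function.Injective j := fun x y h => by
    induction x using QuotientGroup.induction_on
    induction y using QuotientGroup.induction_on
    rw [hj, hj] at h
    have h' := QuotientGroup.eq.1 h
    exact QuotientGroup.eq.2 (by simpa [Subgroup.mem_subgroupOf] using h')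
  have hjsurj : Function.Surjective j := fun y => by
    induction y using QuotientGroup.induction_on with
    | H g =>
    obtain ⟨x, hx, hxH⟩ := hNtrans 1 g⁻¹
    refine ⟨((⟨x, hx⟩⁻¹ : N) : N ⧸ H.subgroupOf N), ?_⟩
    rw [hj]
    exact QuotientGroup.eq.2 (by simpa using hxH)
  have hindex : (H.subgroupOf N).index = n := by
    rw [← hidx]
    exact Nat.card_congr (Equiv.ofBijective j ⟨hjinj, hjsurj⟩)
  have hstable : ∀ (g : N) ω, ∀ w ∈ (φ ∘ j) ω, g • w ∈ (φ ∘ j) (g • ω) := fun g ω w hw => by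
    induction ω using QuotientGroup.induction_on with
    | H x =>
    rw [Function.comp_apply, hj, hφ] at hw
    obtain ⟨v, hv, rfl⟩ := hw
    change _ ∈ φ (((g * x : N) : G) : G ⧸ H)
    rw [hφ]
    exact ⟨v, hv, mul_smul (g : G) (x : G) v⟩
  have hequiv : ∀ ω, ∃ g : G, (φ ∘ j) ω = V.map (DistribSMul.toLinearMap F W g) := fun ω => by
    induction ω using QuotientGroup.induction_on with
    | H x => exact ⟨x, hφ x⟩
  have hfin : ∀ ω, FiniteDimensional F ((φ ∘ j) ω) := fun ω => by
    obtain ⟨g, hg⟩ := hequiv ω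
    rw [hg]
    infer_instance
  have hrank : ∀ ω, Module.finrank F ((φ ∘ j) ω) ≤ a := fun ω => by
    obtain ⟨g, hg⟩ := hequiv ω
    rw [hg, ← ha]
    exact Submodule.finrank_map_le _ _
  have hind' : iSupIndep (φ ∘ j) := hind.comp hjinj
  have hsup' : iSup (φ ∘ j) = ⊤ := by rw [← hsup]; exact hjsurj.iSup_comp φ
  have hS : ∀ g : N, ∀ w ∈ S, g • w ∈ S := fun g => hSstable g
  rw [mul_min_of_nonneg _ _ (Nat.cast_nonneg a), le_min_iff]
  constructor
  · obtain ⟨T, hTS, hT, hspan⟩ :=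
      exists_finset_orbitSpan_eq_card_le_mul_wstar hind' hsup' hstable hrank hS
    rw [hindex] at hT
    exact (Nat.cast_le.2 (dMod_le_card hSstable hTS hspan)).trans hT
  · obtain ⟨T, hTS, hT, hspan⟩ :=
      exists_finset_orbitSpan_eq_card_le_mul_pow p hsup' hstable hrank hS
    rw [← Subgroup.index_eq_card, hindex] at hT
    exact (Nat.cast_le.2 (dMod_le_card hSstable hTS hspan)).trans hT
end

section
/- For every integer k ≥ 1 there exists a transitive permutation group G of degree 2^{2k} which is a 2-group and satisfies d(G) = binom(2k−1, k−1) + 2k − 1 = (1/2)·binom(2k, k) + 2k − 1. Consequently, for every ε > 0 and all sufficiently large k, such a group satisfies d(G) ≥ (√(2/π) − ε)·2^{2k}/(2√(2k)) + 2k − 1. -/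
/-- `dGen G` is `d(G)`: the minimal cardinality of a generating set of the group `G`. -/
noncomputable def dGen (G : Type*) [Group G] : ℕ :=
  sInf {k : ℕ | ∃ S : Finset G, S.card = k ∧ Subgroup.closure (S : Set G) = ⊤}

namespace ReedMuller

open Finset

variable {ι : Type*}

/-- The squarefree monomial function `a ↦ ∏ i ∈ S, a i` over `F₂`. -/
def monomial (S : Finset ι) (a : ι → ZMod 2) : ZMod 2 := ∏ i ∈ S, a i

/-- Precomposition with the translation by `b`. -/
def translate (b : ι → ZMod 2) :
    ((ι → ZMod 2) → ZMod 2) →ₗ[ZMod 2] ((ι → ZMod 2) → ZMod 2) where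
  toFun f := fun a => f (a + b)
  map_add' _ _ := rfl
  map_smul' _ _ := rfl

lemma translate_zero (f : (ι → ZMod 2) → ZMod 2) : translate 0 f = f := by
  ext a
  simp [translate]

/-- The permutation `(a, z) ↦ (a + b, z + f a)`. -/
def affinePerm (b : ι → ZMod 2) (f : (ι → ZMod 2) → ZMod 2) :
    Equiv.Perm ((ι → ZMod 2) × ZMod 2) where
  toFun p := (p.1 + b, p.2 + f p.1)
  invFun p := (p.1 - b, p.2 - f (p.1 - b))
  left_inv p := by simp
  right_inv p := by simp

@[simp]
lemma affinePerm_apply (b : ι → ZMod 2) (f : (ι → ZMod 2) → ZMod 2)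
    (p : (ι → ZMod 2) × ZMod 2) : affinePerm b f p = (p.1 + b, p.2 + f p.1) := rfl

lemma affinePerm_mul (b c : ι → ZMod 2) (f g : (ι → ZMod 2) → ZMod 2) :
    affinePerm b f * affinePerm c g = affinePerm (b + c) (g + translate c f) := by
  ext1 p
  ext1
  · simp only [Equiv.Perm.mul_apply, affinePerm_apply]
    abel
  · simp [translate, add_assoc]

lemma affinePerm_zero : affinePerm (0 : ι → ZMod 2) 0 = 1 := by
  ext1 p
  simp

lemma affinePerm_inv (b : ι → ZMod 2) (f : (ι → ZMod 2) → ZMod 2) :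
    (affinePerm b f)⁻¹ = affinePerm b (translate b f) := by
  rw [inv_eq_iff_mul_eq_one, affinePerm_mul]
  have h : translate b f + translate b f = 0 := ZModModule.add_self _
  rw [h, ZModModule.add_self, affinePerm_zero]

variable [DecidableEq ι]

/-- The Reed–Muller code: polynomial functions over `F₂` of degree at most `k`. It is the
realization inside `F₂[A]` of a power of the radical. -/
def code (ι : Type*) [DecidableEq ι] (k : ℕ) :
    Submodule (ZMod 2) ((ι → ZMod 2) → ZMod 2) :=
  Submodule.span (ZMod 2) {f | ∃ S : Finset ι, S.card ≤ k ∧ f = monomial S}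

/-- The characteristic vector of a finite set. -/
def indicator (T : Finset ι) (i : ι) : ZMod 2 := if i ∈ T then 1 else 0

/-- The coefficient of `monomial S` in the polynomial expansion of a function. -/
def coeff (S : Finset ι) : ((ι → ZMod 2) → ZMod 2) →ₗ[ZMod 2] ZMod 2 where
  toFun f := ∑ T ∈ S.powerset, f (indicator T)
  map_add' f g := by simp [sum_add_distrib]
  map_smul' c f := by simp [mul_sum]

lemma monomial_mem_code {k : ℕ} {S : Finset ι} (hS : S.card ≤ k) :
    monomial S ∈ code ι k :=
  Submodule.subset_span ⟨S, hS, rfl⟩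

lemma monomial_indicator (S T : Finset ι) :
    monomial S (indicator T) = if S ⊆ T then 1 else 0 := by
  simp only [monomial, indicator]
  split_ifs with h
  · exact prod_eq_one fun i hi => if_pos (h hi)
  · obtain ⟨i, hi, hiT⟩ := not_subset.mp h
    exact prod_eq_zero hi (if_neg hiT)

lemma coeff_monomial (S U : Finset ι) :
    coeff S (monomial U) = if U = S then 1 else 0 := by
  have h : coeff S (monomial U) = ((Icc U S).card : ZMod 2) := by
    change ∑ T ∈ S.powerset, monomial U (indicator T) = _
    simp only [monomial_indicator, sum_boole]
    congr 2
    ext T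
    simp [and_comm]
  rw [h]
  by_cases hUS : U ⊆ S
  · rw [card_Icc_finset hUS]
    split_ifs with he
    · simp [he]
    · have hlt : U.card < S.card := card_lt_card (hUS.ssubset_of_ne he)
      obtain ⟨d, hd⟩ : ∃ d, S.card - U.card = d + 1 := ⟨S.card - U.card - 1, by omega⟩
      rw [hd, pow_succ]
      push_cast
      rw [show (2 : ZMod 2) = 0 from rfl, mul_zero]
  · rw [Icc_eq_empty hUS, if_neg (fun h => hUS h.subset)]
    simp

lemma translate_monomial (b : ι → ZMod 2) (U : Finset ι) :
    translate b (monomial U) = ∑ T ∈ U.powerset, monomial (U \ T) b • monomial T := by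
  ext a
  change ∏ i ∈ U, (a i + b i) = _
  rw [prod_add]
  simp [monomial, mul_comm]

lemma translate_mem_code {k : ℕ} (b : ι → ZMod 2) {f : (ι → ZMod 2) → ZMod 2}
    (hf : f ∈ code ι k) : translate b f ∈ code ι k := by
  induction hf using Submodule.span_induction with
  | mem f hf =>
    obtain ⟨U, hU, rfl⟩ := hf
    rw [translate_monomial]
    refine Submodule.sum_mem _ fun T hT => Submodule.smul_mem _ _ (monomial_mem_code ?_)
    exact (card_le_card (mem_powerset.mp hT)).trans hU
  | zero => simp
  | add f g _ _ hf hg => rw [map_add]; exact add_mem hf hg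
  | smul c f _ hf => rw [map_smul]; exact Submodule.smul_mem _ _ hf

/-- Translations do not change the coefficients of top degree. -/
lemma coeff_translate {S : Finset ι} (b : ι → ZMod 2) {f : (ι → ZMod 2) → ZMod 2}
    (hf : f ∈ code ι S.card) : coeff S (translate b f) = coeff S f := by
  induction hf using Submodule.span_induction with
  | mem f hf =>
    obtain ⟨U, hU, rfl⟩ := hf
    rw [translate_monomial, map_sum]
    simp only [map_smul, coeff_monomial, smul_eq_mul, mul_ite, mul_one, mul_zero]
    rw [sum_ite_eq']
    by_cases hUS : U = S
    · simp [hUS, monomial]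
    · rw [if_neg, if_neg hUS]
      intro hSU
      exact hUS (eq_of_subset_of_card_le (mem_powerset.mp hSU) hU).symm
  | zero => simp
  | add f g _ _ hf hg => simp only [map_add, hf, hg]
  | smul c f _ hf => simp only [map_smul, hf]

lemma monomial_insert_add_translate {i : ι} {T : Finset ι} (hi : i ∉ T) :
    monomial (insert i T) + translate (Pi.single i 1) (monomial (insert i T)) = monomial T := by
  ext a
  change ∏ j ∈ insert i T, a j + ∏ j ∈ insert i T, (a j + (Pi.single i 1 : ι → ZMod 2) j) =
    ∏ j ∈ T, a j
  rw [prod_insert hi, prod_insert hi]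
  have h : ∏ j ∈ T, (a j + (Pi.single i 1 : ι → ZMod 2) j) = ∏ j ∈ T, a j :=
    prod_congr rfl fun j hj => by
      rw [Pi.single_eq_of_ne (ne_of_mem_of_not_mem hj hi), add_zero]
  rw [h, Pi.single_eq_same, add_mul, one_mul, ← add_assoc, CharTwo.add_self_eq_zero, zero_add]

/-- The group `code ι k ⋊ (ι → F₂)` acting on `(ι → F₂) × F₂`. -/
def affineGroup (ι : Type*) [DecidableEq ι] (k : ℕ) :
    Subgroup (Equiv.Perm ((ι → ZMod 2) × ZMod 2)) where
  carrier := {σ | ∃ b, ∃ f ∈ code ι k, σ = affinePerm b f}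
  mul_mem' := by
    rintro _ _ ⟨b, f, hf, rfl⟩ ⟨c, g, hg, rfl⟩
    exact ⟨_, _, add_mem hg (translate_mem_code c hf), affinePerm_mul b c f g⟩
  one_mem' := ⟨0, 0, zero_mem _, affinePerm_zero.symm⟩
  inv_mem' := by
    rintro _ ⟨b, f, hf, rfl⟩
    exact ⟨_, _, translate_mem_code b hf, affinePerm_inv b f⟩

lemma affinePerm_mem {k : ℕ} (b : ι → ZMod 2) {f : (ι → ZMod 2) → ZMod 2}
    (hf : f ∈ code ι k) : affinePerm b f ∈ affineGroup ι k := ⟨b, f, hf, rfl⟩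

lemma isPGroup_affineGroup (k : ℕ) : IsPGroup 2 (affineGroup ι k) := by
  rintro ⟨_, b, f, hf, rfl⟩
  refine ⟨2, Subtype.ext ?_⟩
  change affinePerm b f ^ (2 ^ 2) = 1
  rw [pow_two 2, pow_mul, pow_two, pow_two, affinePerm_mul, affinePerm_mul,
    ZModModule.add_self b, add_zero]
  rw [translate_zero, ZModModule.add_self, affinePerm_zero]

lemma exists_mem_affineGroup_apply_eq (k : ℕ) (p q : (ι → ZMod 2) × ZMod 2) :
    ∃ σ ∈ affineGroup ι k, σ p = q := by
  have hone : monomial (∅ : Finset ι) ∈ code ι k := monomial_mem_code (by simp)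
  refine ⟨_, affinePerm_mem (q.1 - p.1) (Submodule.smul_mem _ (q.2 - p.2) hone), ?_⟩
  ext1 <;> simp [monomial]

variable [Fintype ι]

/-- The generators of the affine group: the unit translations and the monomials of top degree. -/
def generator (ι : Type*) [Fintype ι] [DecidableEq ι] (k : ℕ) :
    ι ⊕ {S : Finset ι // S.card = k} → Equiv.Perm ((ι → ZMod 2) × ZMod 2) :=
  Sum.elim (fun i => affinePerm (Pi.single i 1) 0) (fun S => affinePerm 0 (monomial S.1))

lemma zmod_two_eq_zero_or_one (c : ZMod 2) : c = 0 ∨ c = 1 := by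
  revert c
  decide

lemma affinePerm_zero_right_mem_closure (k : ℕ) (b : ι → ZMod 2) :
    affinePerm b 0 ∈ Subgroup.closure (Set.range (generator ι k)) := by
  rw [← univ_sum_single b]
  refine sum_induction _
    (fun c => affinePerm c 0 ∈ Subgroup.closure (Set.range (generator ι k)))
    (fun c d hc hd => ?_) ?_ fun i _ => ?_
  · have h := mul_mem hc hd
    rwa [affinePerm_mul, map_zero, add_zero] at h
  · rw [affinePerm_zero]
    exact one_mem _
  · rcases zmod_two_eq_zero_or_one (b i) with h | h
    · rw [h, Pi.single_zero, affinePerm_zero]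
      exact one_mem _
    · rw [h]
      exact Subgroup.subset_closure ⟨Sum.inl i, rfl⟩

lemma affinePerm_monomial_mem_closure {k : ℕ} (hk : k ≤ Fintype.card ι) (d : ℕ)
    (S : Finset ι) (hS : S.card + d = k) :
    affinePerm 0 (monomial S) ∈ Subgroup.closure (Set.range (generator ι k)) := by
  induction d generalizing S with
  | zero => exact Subgroup.subset_closure ⟨Sum.inr ⟨S, hS⟩, rfl⟩
  | succ d ih =>
    obtain ⟨i, hi⟩ : ∃ i, i ∉ S := by
      by_contra! h
      rw [(eq_univ_iff_forall.mpr h : S = univ), card_univ] at hS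
      omega
    have hm := ih (insert i S) (by rw [card_insert_of_notMem hi]; omega)
    have he := affinePerm_zero_right_mem_closure k (Pi.single i 1 : ι → ZMod 2)
    have h := mul_mem (mul_mem he hm) (mul_mem he hm)
    rw [affinePerm_mul, affinePerm_mul] at h
    simp only [map_zero, add_zero, ZModModule.add_self] at h
    rwa [monomial_insert_add_translate hi] at h

lemma closure_generator {k : ℕ} (hk : k ≤ Fintype.card ι) :
    Subgroup.closure (Set.range (generator ι k)) = affineGroup ι k := by
  apply le_antisymm
  · rw [Subgroup.closure_le]
    rintro _ ⟨i | S, rfl⟩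
    · exact affinePerm_mem _ (zero_mem _)
    · exact affinePerm_mem _ (monomial_mem_code S.2.le)
  · rintro _ ⟨b, f, hf, rfl⟩
    have hf' : affinePerm 0 f ∈ Subgroup.closure (Set.range (generator ι k)) := by
      induction hf using Submodule.span_induction with
      | mem f hf =>
        obtain ⟨S, hS, rfl⟩ := hf
        exact affinePerm_monomial_mem_closure hk (k - S.card) S (by omega)
      | zero => rw [affinePerm_zero]; exact one_mem _
      | add f g _ _ hf hg =>
        have h := mul_mem hg hf
        rw [affinePerm_mul, add_zero, translate_zero] at h
        exact h
      | smul c f _ hf =>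
        rcases zmod_two_eq_zero_or_one c with rfl | rfl
        · rw [zero_smul, affinePerm_zero]
          exact one_mem _
        · rwa [one_smul]
    have h := mul_mem (affinePerm_zero_right_mem_closure k b) hf'
    rwa [affinePerm_mul, map_zero, add_zero, add_zero] at h

/-- The map to the Frattini quotient, recording the translation part and the coefficients of
top degree. -/
def frattiniHom (ι : Type*) [Fintype ι] [DecidableEq ι] (k : ℕ) :
    affineGroup ι k →*
      Multiplicative ((ι → ZMod 2) × ({S : Finset ι // S.card = k} → ZMod 2)) :=
  MonoidHom.mk' (fun σ => Multiplicative.ofAdd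
      ((σ.1 (0, 0)).1, fun S => coeff S.1 fun a => (σ.1 (a, 0)).2)) <| by
    rintro ⟨_, b, f, hf, rfl⟩ ⟨_, c, g, hg, rfl⟩
    rw [← ofAdd_add]
    congr 1
    ext1
    · simp [add_comm]
    · ext S
      have hc := coeff_translate c (S := S.1) (f := f) (by rwa [S.2])
      have h : coeff S.1 (g + translate c f) = coeff S.1 f + coeff S.1 g := by
        rw [map_add, hc, add_comm]
      change coeff S.1 (fun a => ((affinePerm b f * affinePerm c g) (a, 0)).2) =
        coeff S.1 (fun a => 0 + f a) + coeff S.1 (fun a => 0 + g a)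
      simpa only [affinePerm_mul, affinePerm_apply, zero_add] using h

lemma frattiniHom_surjective (k : ℕ) : Function.Surjective (frattiniHom ι k) := by
  intro v
  obtain ⟨b, c⟩ := v
  let f : (ι → ZMod 2) → ZMod 2 :=
    ∑ S : {S : Finset ι // S.card = k}, c S • monomial S.1
  have hf : f ∈ code ι k :=
    Submodule.sum_mem _ fun S _ => Submodule.smul_mem _ _ (monomial_mem_code S.2.le)
  have hc (S : {S : Finset ι // S.card = k}) : coeff S.1 f = c S := by
    simp [f, map_sum, coeff_monomial, ← Subtype.ext_iff]
  refine ⟨⟨_, affinePerm_mem b hf⟩, ?_⟩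
  refine congrArg Multiplicative.ofAdd (Prod.ext ?_ (funext fun S => ?_))
  · simp
  · simpa using hc S

end ReedMuller

open Module in
/-- A group surjecting onto a vector space over `F₂` of dimension `N` cannot be generated by
fewer than `N` elements. -/
lemma finrank_le_card_of_closure_eq_top {G V : Type*} [Group G] [AddCommGroup V]
    [Module (ZMod 2) V] (φ : G →* Multiplicative V) (hφ : Function.Surjective φ)
    (S : Finset G) (hS : Subgroup.closure (S : Set G) = ⊤) : finrank (ZMod 2) V ≤ S.card := by
  classical
  let T : Finset V := S.image fun g => (φ g).toAdd
  have hmem (g : G) : (φ g).toAdd ∈ Submodule.span (ZMod 2) (T : Set V) := by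
    have hg : g ∈ Subgroup.closure (S : Set G) := hS ▸ Subgroup.mem_top g
    induction hg using Subgroup.closure_induction with
    | mem x hx => exact Submodule.subset_span (Finset.mem_coe.mpr (Finset.mem_image_of_mem _ hx))
    | one => simp
    | mul x y _ _ hx hy => rw [map_mul, toAdd_mul]; exact add_mem hx hy
    | inv x _ hx => rw [map_inv, toAdd_inv]; exact neg_mem hx
  have htop : Submodule.span (ZMod 2) (T : Set V) = ⊤ := by
    refine eq_top_iff.mpr fun v _ => ?_
    obtain ⟨g, hg⟩ := hφ (Multiplicative.ofAdd v)
    simpa [hg] using hmem g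
  calc finrank (ZMod 2) V = finrank (ZMod 2) (Submodule.span (ZMod 2) (T : Set V)) := by
        rw [htop, finrank_top]
    _ ≤ T.card := finrank_span_finset_le_card T
    _ ≤ S.card := Finset.card_image_le

lemma dGen_eq_of_surjective {G V J : Type*} [Group G] [Fintype J] [AddCommGroup V]
    [Module (ZMod 2) V] (φ : G →* Multiplicative V) (hφ : Function.Surjective φ)
    (g : J → G) (hg : Subgroup.closure (Set.range g) = ⊤)
    (hJ : Fintype.card J = Module.finrank (ZMod 2) V) : dGen G = Fintype.card J := by
  classical
  have hclosure : Subgroup.closure ((Finset.univ.image g : Finset G) : Set G) = ⊤ := by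
    simpa using hg
  have hcard : (Finset.univ.image g).card = Fintype.card J :=
    le_antisymm Finset.card_image_le
      (hJ ▸ finrank_le_card_of_closure_eq_top φ hφ _ hclosure)
  refine le_antisymm (Nat.sInf_le ⟨_, hcard, hclosure⟩) ?_
  refine le_csInf ⟨_, _, hcard, hclosure⟩ ?_
  rintro _ ⟨S, rfl, hS⟩
  exact hJ ▸ finrank_le_card_of_closure_eq_top φ hφ S hS

lemma exists_generating_finset_of_mulEquiv {G H : Type*} [Group G] [Group H] (e : G ≃* H)
    {n : ℕ} (h : ∃ S : Finset G, S.card = n ∧ Subgroup.closure (S : Set G) = ⊤) :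
    ∃ S : Finset H, S.card = n ∧ Subgroup.closure (S : Set H) = ⊤ := by
  obtain ⟨S, hn, hS⟩ := h
  refine ⟨S.map e.toEquiv.toEmbedding, by simpa using hn, ?_⟩
  have h := MonoidHom.map_closure e.toMonoidHom (S : Set G)
  rw [hS, Subgroup.map_top_of_surjective _ e.surjective] at h
  rw [h]
  simp

lemma dGen_congr {G H : Type*} [Group G] [Group H] (e : G ≃* H) : dGen G = dGen H := by
  unfold dGen
  congr 1
  ext n
  exact ⟨exists_generating_finset_of_mulEquiv e, exists_generating_finset_of_mulEquiv e.symm⟩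

namespace ReedMuller

lemma dGen_affineGroup {ι : Type*} [Fintype ι] [DecidableEq ι] {k : ℕ}
    (hk : k ≤ Fintype.card ι) :
    dGen (affineGroup ι k) = Fintype.card ι + (Fintype.card ι).choose k := by
  have hcard : Fintype.card (ι ⊕ {S : Finset ι // S.card = k}) =
      Fintype.card ι + (Fintype.card ι).choose k := by
    rw [Fintype.card_sum, Fintype.card_finset_len]
  have hgen (j) : generator ι k j ∈ affineGroup ι k :=
    closure_generator hk ▸ Subgroup.subset_closure ⟨j, rfl⟩
  rw [← hcard]
  refine dGen_eq_of_surjective (frattiniHom ι k) (frattiniHom_surjective k)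
    (fun j => ⟨generator ι k j, hgen j⟩) ?_ (by simp [Module.finrank_prod])
  apply Subgroup.map_injective (affineGroup ι k).subtype_injective
  rw [MonoidHom.map_closure, ← Set.range_comp, ← MonoidHom.range_eq_map, Subgroup.range_subtype]
  exact closure_generator hk

end ReedMuller

lemma exists_transitive_two_group (k : ℕ) (hk : 1 ≤ k) :
    ∃ G : Subgroup (Equiv.Perm (Fin (2 ^ (2 * k)))),
      MulAction.IsPretransitive G (Fin (2 ^ (2 * k))) ∧ IsPGroup 2 G ∧
      dGen G = (2 * k - 1).choose (k - 1) + 2 * k - 1 := by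
  let e : (Fin (2 * k - 1) → ZMod 2) × ZMod 2 ≃ Fin (2 ^ (2 * k)) :=
    Fintype.equivFinOfCardEq (by
      rw [Fintype.card_prod, Fintype.card_fun, ZMod.card, Fintype.card_fin, ← pow_succ]
      congr 1
      omega)
  let G := ReedMuller.affineGroup (Fin (2 * k - 1)) k
  let E : G ≃* G.map e.permCongrHom.toMonoidHom := e.permCongrHom.subgroupMap G
  refine ⟨G.map e.permCongrHom.toMonoidHom, ⟨fun x y => ?_⟩,
    (ReedMuller.isPGroup_affineGroup k).of_equiv E, ?_⟩
  · obtain ⟨σ, hσ, hxy⟩ := ReedMuller.exists_mem_affineGroup_apply_eq k (e.symm x) (e.symm y)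
    refine ⟨⟨_, Subgroup.mem_map_of_mem _ hσ⟩, ?_⟩
    change e (σ (e.symm x)) = y
    rw [hxy, e.apply_symm_apply]
  · rw [← dGen_congr E, ReedMuller.dGen_affineGroup (by rw [Fintype.card_fin]; omega),
      Fintype.card_fin, Nat.choose_symm_of_eq_add (show 2 * k - 1 = k + (k - 1) by omega)]
    omega

lemma two_mul_choose_pred (k : ℕ) (hk : 1 ≤ k) :
    2 * (2 * k - 1).choose (k - 1) = (2 * k).choose k := by
  obtain ⟨j, rfl⟩ : ∃ j, k = j + 1 := ⟨k - 1, by omega⟩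
  have h := Nat.choose_symm_of_eq_add (show 2 * j + 1 = j + (j + 1) by omega)
  rw [show 2 * (j + 1) = 2 * j + 1 + 1 by ring, Nat.choose_succ_succ, ← h]
  simp [two_mul]

/-- A lower bound for the central binomial coefficient, from the Wallis product. -/
lemma wallis_le_choose (k : ℕ) :
    Real.sqrt (2 / Real.pi) * 2 ^ (2 * k) / Real.sqrt (2 * k + 1) ≤ ((2 * k).choose k : ℝ) := by
  have hpi := Real.pi_pos
  have hW := Real.Wallis.W_le k
  have hfac : ((2 * k).choose k : ℝ) * (k.factorial * k.factorial) = (2 * k).factorial := by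
    have h := Nat.choose_mul_factorial_mul_factorial (show k ≤ 2 * k by omega)
    rw [show 2 * k - k = k by omega, mul_assoc] at h
    exact_mod_cast h
  have hC : (0 : ℝ) < (2 * k).choose k := by
    exact_mod_cast Nat.choose_pos (show k ≤ 2 * k by omega)
  have hk : (0 : ℝ) < k.factorial := by exact_mod_cast k.factorial_pos
  rw [Real.Wallis.W_eq_factorial_ratio, ← hfac, div_le_iff₀ (by positivity)] at hW
  have hbound : 2 / Real.pi * (2 ^ (2 * k)) ^ 2 / (2 * k + 1) ≤ ((2 * k).choose k : ℝ) ^ 2 := by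
    rw [div_le_iff₀ (by positivity), div_mul_eq_mul_div, div_le_iff₀ hpi]
    have hpow : (2 : ℝ) ^ (4 * k) = (2 ^ (2 * k)) ^ 2 := by rw [← pow_mul]; ring_nf
    rw [hpow] at hW
    refine le_of_mul_le_mul_right ?_ (pow_pos hk 4)
    linarith
  refine le_of_sq_le_sq ?_ hC.le
  rwa [div_pow, mul_pow, Real.sq_sqrt (by positivity), Real.sq_sqrt (by positivity)]

lemma exists_forall_le_half_choose (ε : ℝ) (hε : 0 < ε) :
    ∃ k₀ : ℕ, ∀ k : ℕ, k₀ ≤ k → 1 ≤ k →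
      (Real.sqrt (2 / Real.pi) - ε) * 2 ^ (2 * k) / (2 * Real.sqrt (2 * k)) ≤
        (1 / 2) * ((2 * k).choose k : ℝ) := by
  obtain ⟨k₀, hk₀⟩ := exists_nat_ge (1 / ε)
  refine ⟨k₀, fun k hk hk1 => ?_⟩
  have hkε : 1 ≤ k * ε := by
    rw [← div_le_iff₀ hε]
    exact hk₀.trans (by exact_mod_cast hk)
  have hk1' : (1 : ℝ) ≤ k := by exact_mod_cast hk1
  set s := Real.sqrt (2 / Real.pi) with hs
  have hs0 : 0 ≤ s := Real.sqrt_nonneg _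
  have hs1 : s ≤ 1 := by
    rw [hs, Real.sqrt_le_iff, one_pow, div_le_one Real.pi_pos]
    refine ⟨zero_le_one, ?_⟩
    linarith [Real.pi_gt_three]
  set p := Real.sqrt (2 * k) with hp
  set q := Real.sqrt (2 * k + 1) with hq
  have hp0 : 0 < p := Real.sqrt_pos.mpr (by positivity)
  have hq0 : 0 < q := Real.sqrt_pos.mpr (by positivity)
  have hp2 : p ^ 2 = 2 * k := Real.sq_sqrt (by positivity)
  have hq2 : q ^ 2 = 2 * k + 1 := Real.sq_sqrt (by positivity)
  have hpq : p ≤ q := Real.sqrt_le_sqrt (by linarith)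
  have hratio : (s - ε) / p ≤ s / q := by
    rw [div_le_div_iff₀ hp0 hq0]
    have hdiff : p * (q - p) ≤ 1 := by nlinarith
    have h : s * (q - p) * p ≤ ε * q * p :=
      calc s * (q - p) * p = s * (p * (q - p)) := by ring
        _ ≤ 1 := mul_le_one₀ hs1 (mul_nonneg hp0.le (sub_nonneg.mpr hpq)) hdiff
        _ ≤ ε * p ^ 2 := by rw [hp2]; linarith
        _ = ε * p * p := by ring
        _ ≤ ε * q * p := by gcongr
    have := le_of_mul_le_mul_right h hp0
    linarith
  have hmul := mul_le_mul_of_nonneg_right hratio (by positivity : (0 : ℝ) ≤ 2 ^ (2 * k))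
  have hwallis := wallis_le_choose k
  calc (s - ε) * 2 ^ (2 * k) / (2 * p) = (1 / 2) * ((s - ε) / p * 2 ^ (2 * k)) := by
        field_simp
    _ ≤ (1 / 2) * (s / q * 2 ^ (2 * k)) := by linarith
    _ = (1 / 2) * (s * 2 ^ (2 * k) / q) := by ring
    _ ≤ _ := by linarith

/-- For every integer `k ≥ 1` there exists a transitive permutation group `G` of degree
`2^(2k)` which is a `2`-group and satisfies
`d(G) = binom(2k−1, k−1) + 2k − 1 = (1/2)·binom(2k, k) + 2k − 1`.  Consequently, for every
`ε > 0` and all sufficiently large `k`, such a group satisfies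
`d(G) ≥ (√(2/π) − ε)·2^(2k)/(2·√(2k)) + 2k − 1`. -/
theorem stmt_19 :
    (∀ k : ℕ, 1 ≤ k →
      ∃ G : Subgroup (Equiv.Perm (Fin (2 ^ (2 * k)))),
        MulAction.IsPretransitive G (Fin (2 ^ (2 * k))) ∧ IsPGroup 2 G ∧
        dGen G = (2 * k - 1).choose (k - 1) + 2 * k - 1 ∧
        (dGen G : ℝ) = (1 / 2) * (2 * k).choose k + 2 * k - 1) ∧
    ∀ ε : ℝ, 0 < ε → ∃ k₀ : ℕ, ∀ k : ℕ, k₀ ≤ k → 1 ≤ k →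
      ∃ G : Subgroup (Equiv.Perm (Fin (2 ^ (2 * k)))),
        MulAction.IsPretransitive G (Fin (2 ^ (2 * k))) ∧ IsPGroup 2 G ∧
        dGen G = (2 * k - 1).choose (k - 1) + 2 * k - 1 ∧
        (dGen G : ℝ) = (1 / 2) * (2 * k).choose k + 2 * k - 1 ∧
        (Real.sqrt (2 / Real.pi) - ε) * 2 ^ (2 * k) / (2 * Real.sqrt (2 * k)) + 2 * k - 1 ≤
          (dGen G : ℝ) := by
  have hreal (k : ℕ) (hk : 1 ≤ k) (d : ℕ) (hd : d = (2 * k - 1).choose (k - 1) + 2 * k - 1) :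
      (d : ℝ) = (1 / 2) * (2 * k).choose k + 2 * k - 1 := by
    have hadd : d + 1 = (2 * k - 1).choose (k - 1) + 2 * k := by omega
    have haddR : (d : ℝ) + 1 = (2 * k - 1).choose (k - 1) + 2 * k := by exact_mod_cast hadd
    have hchoose : 2 * ((2 * k - 1).choose (k - 1) : ℝ) = (2 * k).choose k := by
      exact_mod_cast two_mul_choose_pred k hk
    linarith
  refine ⟨fun k hk => ?_, fun ε hε => ?_⟩
  · obtain ⟨G, htrans, hG, hd⟩ := exists_transitive_two_group k hk
    exact ⟨G, htrans, hG, hd, hreal k hk _ hd⟩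
  · obtain ⟨k₀, hk₀⟩ := exists_forall_le_half_choose ε hε
    refine ⟨k₀, fun k hkk₀ hk => ?_⟩
    obtain ⟨G, htrans, hG, hd⟩ := exists_transitive_two_group k hk
    refine ⟨G, htrans, hG, hd, hreal k hk _ hd, ?_⟩
    rw [hreal k hk _ hd]
    linarith [hk₀ k hkk₀ hk]
end
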